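/- arXiv:1601.03678 — 7 statements merged into one kernel-verified Lean document; each statement's English description precedes it below -/
import Mathlib

section
/- Let v be a random vector uniformly distributed on the unit sphere S^{n-1} of R^n. Then for any real constant C > 1, with probability at least 1 - 2 n^{1-C} - exp(-((C-1)^2/(4C^2)) n), the largest coordinate in absolute value satisfies ||v||_inf <= sqrt(2 C^3 (log n) / n). -/
open MeasureTheory

/-- A measure `μ` on `ℝⁿ` is the uniform (rotation-invariant) probability distribution on the
unit sphere `S^{n-1}`: it is a probability measure, it gives full mass to the unit sphere, and
it is invariant under every linear isometry of `ℝⁿ`. -/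
def IsUniformOnSphere {n : ℕ} (μ : Measure (EuclideanSpace ℝ (Fin n))) : Prop :=
  IsProbabilityMeasure μ ∧
  μ (Metric.sphere (0 : EuclideanSpace ℝ (Fin n)) 1) = 1 ∧
  ∀ O : EuclideanSpace ℝ (Fin n) ≃ₗᵢ[ℝ] EuclideanSpace ℝ (Fin n),
    Measure.map O μ = μ

open ProbabilityTheory

lemma aux_sinh_convex : ConvexOn ℝ (Set.Ici (0:ℝ)) Real.sinh := by
  apply convexOn_of_deriv2_nonneg (convex_Ici 0) Real.continuous_sinh.continuousOn
  · exact Real.differentiable_sinh.differentiableOn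
  · simpa using Real.differentiable_cosh.differentiableOn
  · intro x hx
    simp at hx
    simp [Real.sinh_nonneg_iff, hx.le]

lemma aux_sinh_le {u v : ℝ} (hu : 0 ≤ u) (huv : u ≤ v) (hv : 0 < v) :
    v * Real.sinh u ≤ u * Real.sinh v := by
  have h := aux_sinh_convex.2 (Set.mem_Ici.2 hv.le) (Set.mem_Ici.2 (le_refl (0:ℝ)))
    (by positivity : 0 ≤ u / v) (sub_nonneg.2 ((div_le_one hv).2 huv)) (by ring)
  simp only [smul_eq_mul, mul_zero, add_zero, Real.sinh_zero] at h
  rw [div_mul_cancel₀ _ hv.ne'] at h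
  calc v * Real.sinh u ≤ v * (u / v * Real.sinh v) := by gcongr
    _ = u * Real.sinh v := by field_simp

lemma aux_tangent {u v : ℝ} (hu : 0 ≤ u) (hv : 0 < v) :
    Real.cosh v + Real.sinh v / (2 * v) * (u ^ 2 - v ^ 2) ≤ Real.cosh u := by
  set h : ℝ → ℝ := fun u => Real.cosh u - Real.sinh v / (2 * v) * u ^ 2 with hh
  have hd : ∀ x, HasDerivAt h (Real.sinh x - Real.sinh v / v * x) x := by
    intro x
    have := (Real.hasDerivAt_cosh x).sub ((hasDerivAt_pow 2 x).const_mul (Real.sinh v / (2 * v)))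
    have e : Real.sinh x - Real.sinh v / v * x =
        Real.sinh x - Real.sinh v / (2 * v) * (((2 : ℕ) : ℝ) * x ^ (2 - 1)) := by
      push_cast
      have : x ^ (2 - 1) = x := by norm_num
      rw [this]
      field_simp
    rw [e]
    exact this
  have hcont : Continuous h := by fun_prop
  have key : h v ≤ h u := by
    rcases le_total u v with huv | huv
    · have : AntitoneOn h (Set.Icc 0 v) := by
        apply antitoneOn_of_deriv_nonpos (convex_Icc 0 v) hcont.continuousOn
        · exact fun x _ => (hd x).differentiableAt.differentiableWithinAt
        · intro x hx
          rw [interior_Icc] at hx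
          rw [(hd x).deriv]
          have := aux_sinh_le hx.1.le hx.2.le hv
          rw [sub_nonpos, div_mul_eq_mul_div, le_div_iff₀ hv]
          linarith
      exact this ⟨hu, huv⟩ ⟨hv.le, le_rfl⟩ huv
    · have : MonotoneOn h (Set.Ici v) := by
        apply monotoneOn_of_deriv_nonneg (convex_Ici v) hcont.continuousOn
        · exact fun x _ => (hd x).differentiableAt.differentiableWithinAt
        · intro x hx
          rw [interior_Ici] at hx
          rw [(hd x).deriv]
          have hx' : v < x := hx
          have := aux_sinh_le hv.le hx'.le (hv.trans hx')
          rw [sub_nonneg, div_mul_eq_mul_div, div_le_iff₀ hv]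
          linarith
      exact this (Set.mem_Ici.2 le_rfl) huv huv
  simp only [hh] at key
  linarith

lemma aux_gauss_mgf (v : NNReal) (s : ℝ) :
    ∫⁻ z, ENNReal.ofReal (Real.cosh (s * z)) ∂(gaussianReal 0 v) =
      ENNReal.ofReal (Real.exp (v * s ^ 2 / 2)) := by
  have h1 : ∀ t : ℝ, ∫ z, Real.exp (t * z) ∂(gaussianReal 0 v) = Real.exp (v * t ^ 2 / 2) := by
    intro t
    have := congrFun (mgf_id_gaussianReal (μ := 0) (v := v)) t
    simpa [mgf] using this
  have hi : ∀ t : ℝ, Integrable (fun z => Real.exp (t * z)) (gaussianReal 0 v) :=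
    fun t => integrable_exp_mul_gaussianReal t
  have he : (fun z => Real.cosh (s * z)) =
      fun z => (Real.exp (s * z) + Real.exp (-s * z)) / 2 := by
    ext z; rw [Real.cosh_eq]; simp
  rw [← ofReal_integral_eq_lintegral_ofReal]
  · rw [he, integral_div, integral_add (hi s) (hi (-s)), h1, h1]
    congr 1; simp
  · rw [he]; exact ((hi s).add (hi (-s))).div_const 2
  · exact Filter.Eventually.of_forall fun z => (Real.cosh_pos _).le

lemma aux_mgf {n : ℕ} (x : EuclideanSpace ℝ (Fin n)) (s : ℝ) :
    ∫⁻ y, ENNReal.ofReal (Real.cosh (s * inner ℝ x y)) ∂(stdGaussian (EuclideanSpace ℝ (Fin n))) =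
      ENNReal.ofReal (Real.exp (‖x‖ ^ 2 * s ^ 2 / 2)) := by
  have hm := IsGaussian.map_eq_gaussianReal (μ := stdGaussian (EuclideanSpace ℝ (Fin n)))
    (innerSL ℝ x)
  rw [variance_dual_stdGaussian, integral_strongDual_stdGaussian] at hm
  have := aux_gauss_mgf (Real.toNNReal (‖innerSL ℝ x‖ ^ 2)) s
  rw [← hm, lintegral_map (by fun_prop) (by fun_prop)] at this
  simpa using this

lemma aux_coord (n : ℕ) (i : Fin n) :
    Integrable (fun y : EuclideanSpace ℝ (Fin n) => (y i) ^ 2)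
      (stdGaussian (EuclideanSpace ℝ (Fin n))) ∧
    ∫ y, (y i) ^ 2 ∂(stdGaussian (EuclideanSpace ℝ (Fin n))) = 1 := by
  let L : StrongDual ℝ (EuclideanSpace ℝ (Fin n)) := innerSL ℝ (EuclideanSpace.single i 1)
  have hL : ∀ y, L y = y i := by intro y; simp [L, EuclideanSpace.inner_single_left]
  have hv := variance_dual_stdGaussian L
  have h2 : MemLp L 2 (stdGaussian (EuclideanSpace ℝ (Fin n))) := IsGaussian.memLp_dual _ L 2 (by simp)
  constructor
  · simpa [hL] using h2.integrable_sq
  · rw [variance_eq_sub h2, integral_strongDual_stdGaussian] at hv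
    have hn : ‖L‖ = 1 := by simp [L]
    rw [hn] at hv
    simpa [hL] using hv

lemma aux_norm (n : ℕ) :
    Integrable (fun y : EuclideanSpace ℝ (Fin n) => ‖y‖ ^ 2)
      (stdGaussian (EuclideanSpace ℝ (Fin n))) ∧
    ∫ y, ‖y‖ ^ 2 ∂(stdGaussian (EuclideanSpace ℝ (Fin n))) = n := by
  simp_rw [EuclideanSpace.real_norm_sq_eq]
  constructor
  · exact integrable_finsetSum _ fun i _ => (aux_coord n i).1
  · rw [integral_finsetSum _ fun i _ => (aux_coord n i).1]
    simp [(aux_coord n _).2]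

lemma aux_jensen (n : ℕ) (hn : 0 < n) (b : ℝ) :
    ENNReal.ofReal (Real.cosh (b * √n)) ≤
    ∫⁻ y, ENNReal.ofReal (Real.cosh (b * ‖y‖)) ∂(stdGaussian (EuclideanSpace ℝ (Fin n))) := by
  wlog hb : 0 ≤ b
  · have := this n hn (-b) (by linarith)
    simpa using this
  rcases hb.eq_or_lt with rfl | hb
  · simp
  by_cases hf : ∫⁻ y, ENNReal.ofReal (Real.cosh (b * ‖y‖))
      ∂(stdGaussian (EuclideanSpace ℝ (Fin n))) = ⊤
  · rw [hf]; exact le_top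
  have hcoshInt : Integrable (fun y => Real.cosh (b * ‖y‖)) (stdGaussian (EuclideanSpace ℝ (Fin n))) := by
    refine ⟨(by fun_prop), ?_⟩
    rw [hasFiniteIntegral_iff_ofReal (Filter.Eventually.of_forall fun z => (Real.cosh_pos _).le)]
    exact lt_top_iff_ne_top.2 hf
  rw [← ofReal_integral_eq_lintegral_ofReal hcoshInt
    (Filter.Eventually.of_forall fun z => (Real.cosh_pos _).le)]
  apply ENNReal.ofReal_le_ofReal
  have hv : 0 < b * √n := by positivity
  obtain ⟨h1, h2⟩ := aux_norm n
  have hs : √(n:ℝ) ^ 2 = n := Real.sq_sqrt (by positivity)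
  set c := Real.sinh (b * √n) / (2 * (b * √n))
  have hI : Integrable (fun y : EuclideanSpace ℝ (Fin n) => Real.cosh (b * √n) + c * b ^ 2 * (‖y‖ ^ 2 - n))
      (stdGaussian (EuclideanSpace ℝ (Fin n))) :=
    (integrable_const _).add ((h1.sub (integrable_const _)).const_mul _)
  have := integral_mono hI hcoshInt (fun y => by
    have := aux_tangent (u := b * ‖y‖) (by positivity) hv
    simp only
    refine le_trans (le_of_eq ?_) this
    rw [mul_pow, mul_pow, hs]; ring)
  have h3 : Integrable (fun y : EuclideanSpace ℝ (Fin n) => c * b ^ 2 * (‖y‖ ^ 2 - (n:ℝ)))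
      (stdGaussian (EuclideanSpace ℝ (Fin n))) := (h1.sub (integrable_const _)).const_mul _
  rw [integral_add (integrable_const _) h3, integral_const_mul, integral_sub h1 (integrable_const _), h2] at this
  simpa using this

lemma aux_rot {n : ℕ} (μ : Measure (EuclideanSpace ℝ (Fin n)))
    (hμ : IsUniformOnSphere μ) (i : Fin n) (s : ℝ) (y : EuclideanSpace ℝ (Fin n)) :
    ∫⁻ x, ENNReal.ofReal (Real.cosh (s * inner ℝ x y)) ∂μ =
    ∫⁻ x, ENNReal.ofReal (Real.cosh (s * x i * ‖y‖)) ∂μ := by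
  let w : EuclideanSpace ℝ (Fin n) := EuclideanSpace.single i ‖y‖
  have hw : ‖w‖ = ‖y‖ := by simp [w]
  let O := (Submodule.span ℝ {w - y})ᗮ.reflection
  have hO : O w = y := Submodule.reflection_sub hw
  conv_lhs => rw [← hμ.2.2 O]
  rw [lintegral_map (by fun_prop) (by fun_prop)]
  refine lintegral_congr fun x => ?_
  rw [← hO, O.inner_map_map]
  simp [w, EuclideanSpace.inner_single_right, mul_assoc, mul_comm]

lemma aux_mgf_sphere {n : ℕ} (μ : Measure (EuclideanSpace ℝ (Fin n)))
    (hμ : IsUniformOnSphere μ) (i : Fin n) (s : ℝ) :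
    ∫⁻ x, ENNReal.ofReal (Real.cosh (s * √n * x i)) ∂μ ≤ ENNReal.ofReal (Real.exp (s ^ 2 / 2)) := by
  have hn : 0 < n := i.pos
  have := hμ.1
  set γ := stdGaussian (EuclideanSpace ℝ (Fin n))
  have hae : ∀ᵐ x ∂μ, ‖x‖ = 1 := by
    have := (prob_compl_eq_zero_iff (μ := μ) (Metric.isClosed_sphere.measurableSet)).2 hμ.2.1
    filter_upwards [compl_mem_ae_iff.2 this] with x hx
    simpa using hx
  calc ∫⁻ x, ENNReal.ofReal (Real.cosh (s * √n * x i)) ∂μ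
      ≤ ∫⁻ x, ∫⁻ y, ENNReal.ofReal (Real.cosh (s * x i * ‖y‖)) ∂γ ∂μ := by
        refine lintegral_mono fun x => ?_
        refine le_trans (le_of_eq ?_) (aux_jensen n hn (s * x i))
        congr 2; ring
    _ = ∫⁻ y, ∫⁻ x, ENNReal.ofReal (Real.cosh (s * x i * ‖y‖)) ∂μ ∂γ := by
        apply lintegral_lintegral_swap
        apply Measurable.aemeasurable
        unfold Function.uncurry
        fun_prop
    _ = ∫⁻ y, ∫⁻ x, ENNReal.ofReal (Real.cosh (s * inner ℝ x y)) ∂μ ∂γ := by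
        simp_rw [aux_rot μ hμ i]
    _ = ∫⁻ x, ∫⁻ y, ENNReal.ofReal (Real.cosh (s * inner ℝ x y)) ∂γ ∂μ := by
        apply lintegral_lintegral_swap
        apply Measurable.aemeasurable
        unfold Function.uncurry
        fun_prop
    _ = ∫⁻ x, ENNReal.ofReal (Real.exp (s ^ 2 / 2)) ∂μ := by
        apply lintegral_congr_ae
        filter_upwards [hae] with x hx
        rw [aux_mgf, hx]; simp
    _ = _ := by simp

lemma aux_tail {n : ℕ} (μ : Measure (EuclideanSpace ℝ (Fin n)))
    (hμ : IsUniformOnSphere μ) (i : Fin n) (t : ℝ) (ht : 0 ≤ t) :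
    μ {x | t < |x i|} ≤ ENNReal.ofReal (2 * Real.exp (-(n * t ^ 2 / 2))) := by
  have h := aux_mgf_sphere μ hμ i (√n * t)
  have hs : √(n:ℝ) ^ 2 = n := Real.sq_sqrt (by positivity)
  have e1 : √(n:ℝ) * t * √n = n * t := by rw [← hs]; ring_nf; rw [Real.sqrt_sq (by positivity)]
  rw [e1, mul_pow, hs] at h
  have hM := mul_meas_ge_le_lintegral (μ := μ)
    (f := fun x : EuclideanSpace ℝ (Fin n) => ENNReal.ofReal (Real.cosh (n * t * x i)))
    (by fun_prop) (ENNReal.ofReal (Real.exp (n * t ^ 2) / 2))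
  have hsub : {x : EuclideanSpace ℝ (Fin n) | t < |x i|} ⊆
      {x | ENNReal.ofReal (Real.exp (n * t ^ 2) / 2) ≤ ENNReal.ofReal (Real.cosh (n * t * x i))} := by
    intro x hx
    apply ENNReal.ofReal_le_ofReal
    rw [← Real.cosh_abs, abs_mul, abs_of_nonneg (by positivity : (0:ℝ) ≤ n * t), Real.cosh_eq]
    have : Real.exp (n * t ^ 2) ≤ Real.exp (n * t * |x i|) := by
      apply Real.exp_le_exp.2
      have : n * t * t ≤ n * t * |x i| := by
        have : t ≤ |x i| := le_of_lt hx
        gcongr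
      linarith
    have := Real.exp_pos (-(n * t * |x i|))
    linarith
  have h3 := (mul_le_mul_right (measure_mono (μ := μ) hsub) _).trans (hM.trans h)
  have hpos : 0 < Real.exp (n * t ^ 2) / 2 := by positivity
  rw [mul_comm, ← ENNReal.le_div_iff_mul_le (by left; simpa using hpos) (by left; simp),
    ← ENNReal.ofReal_div_of_pos hpos] at h3
  refine h3.trans (le_of_eq ?_)
  congr 1
  rw [div_div_eq_mul_div, mul_comm, mul_div_assoc, ← Real.exp_sub]
  ring_nf

/-- largest coordinate of a random unit vector.  If `v` is uniformly
distributed on the unit sphere `S^{n-1}`, then for every `C > 1`, with probability at least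
`1 - 2 n^{1-C} - exp(-((C-1)²/(4C²)) n)` one has `‖v‖_∞ ≤ √(2 C³ log n / n)`. -/
theorem stmt0 {n : ℕ} (μ : Measure (EuclideanSpace ℝ (Fin n)))
    (hμ : IsUniformOnSphere μ) (C : ℝ) (hC : 1 < C) :
    ENNReal.ofReal
        (1 - 2 * (n : ℝ) ^ ((1 : ℝ) - C)
          - Real.exp (-((C - 1) ^ 2 / (4 * C ^ 2)) * n)) ≤
      μ {x | ∀ i : Fin n, |x i| ≤ Real.sqrt (2 * C ^ 3 * Real.log n / n)} := by
  have := hμ.1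
  rcases Nat.eq_zero_or_pos n with rfl | hn
  · exfalso
    have h := hμ.2.1
    have he : Metric.sphere (0 : EuclideanSpace ℝ (Fin 0)) 1 = ∅ := by
      ext x
      simp [Subsingleton.elim x 0]
    rw [he] at h
    simp at h
  have hn' : (0:ℝ) < n := by exact_mod_cast hn
  have hlog : 0 ≤ Real.log n := Real.log_natCast_nonneg n
  set t := Real.sqrt (2 * C ^ 3 * Real.log n / n) with ht
  have ht2 : t ^ 2 = 2 * C ^ 3 * Real.log n / n := Real.sq_sqrt (by positivity)
  have hbad : μ {x | ∀ i : Fin n, |x i| ≤ t}ᶜ ≤ ENNReal.ofReal (2 * (n:ℝ) ^ (1 - C)) := by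
    have hset : {x : EuclideanSpace ℝ (Fin n) | ∀ i : Fin n, |x i| ≤ t}ᶜ = ⋃ i, {x | t < |x i|} := by
      ext x; simp
    rw [hset]
    refine (measure_iUnion_fintype_le μ _).trans ?_
    refine (Finset.sum_le_sum fun i _ => aux_tail μ hμ i t (Real.sqrt_nonneg _)).trans ?_
    rw [Finset.sum_const, Finset.card_univ, Fintype.card_fin, nsmul_eq_mul,
      ← ENNReal.ofReal_natCast, ← ENNReal.ofReal_mul hn'.le]
    apply ENNReal.ofReal_le_ofReal
    rw [Real.rpow_sub hn', Real.rpow_one, div_eq_mul_inv (n:ℝ), ← Real.rpow_neg hn'.le,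
      Real.rpow_def_of_pos hn']
    have : Real.exp (-(n * t ^ 2 / 2)) ≤ Real.exp (Real.log n * -C) := by
      apply Real.exp_le_exp.2
      rw [ht2]
      have e : (n:ℝ) * (2 * C ^ 3 * Real.log n / n) / 2 = Real.log n * C ^ 3 := by field_simp
      rw [e]
      have : C ≤ C ^ 3 := le_self_pow₀ hC.le (by norm_num)
      have := mul_le_mul_of_nonneg_left this hlog
      linarith
    nlinarith
  have hmeas : MeasurableSet {x : EuclideanSpace ℝ (Fin n) | ∀ i : Fin n, |x i| ≤ t} := by
    rw [Set.ofPred_forall]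
    exact MeasurableSet.iInter fun i => measurableSet_le (by fun_prop) (by fun_prop)
  have hone := prob_add_prob_compl (μ := μ) hmeas
  calc _ ≤ ENNReal.ofReal (1 - 2 * (n : ℝ) ^ ((1 : ℝ) - C)) := by
        apply ENNReal.ofReal_le_ofReal
        have := Real.exp_pos (-((C - 1) ^ 2 / (4 * C ^ 2)) * n)
        linarith
    _ = 1 - ENNReal.ofReal (2 * (n : ℝ) ^ ((1 : ℝ) - C)) := by
        rw [ENNReal.ofReal_sub _ (by positivity), ENNReal.ofReal_one]
    _ ≤ _ := by
        rw [tsub_le_iff_right, ← hone]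
        gcongr
end

section
/- Let n >= 2 and let v be a random vector uniformly distributed on the unit sphere S^{n-1} of R^n. Then for any 0 <= c < 1 and any a > 1, with probability at least exp(-2c) - exp(-((a^2 - sqrt(2a^2 - 1))/2) n), the smallest coordinate in absolute value satisfies ||v||_min >= (c/a) n^{-3/2}. -/
open MeasureTheory

open ProbabilityTheory in
lemma aux_gauss (r : ℝ) :
    gaussianReal 0 1 {x | |x| < r} ≤ ENNReal.ofReal (0.8 * r) := by
  rw [gaussianReal_apply 0 one_ne_zero]
  have hpi : (2.5 : ℝ) ≤ Real.sqrt (2 * Real.pi * ((1 : NNReal) : ℝ)) := by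
    apply Real.le_sqrt_of_sq_le
    have := Real.pi_gt_d2
    push_cast
    nlinarith
  have hb : ∀ x, gaussianPDF 0 1 x ≤ ENNReal.ofReal 0.4 := by
    intro x
    apply ENNReal.ofReal_le_ofReal
    rw [gaussianPDFReal]
    have h1 : (Real.sqrt (2 * Real.pi * ((1 : NNReal) : ℝ)))⁻¹ ≤ 0.4 := by
      calc _ ≤ (2.5 : ℝ)⁻¹ := inv_anti₀ (by norm_num) hpi
        _ = 0.4 := by norm_num
    have h2 : Real.exp (-(x - 0) ^ 2 / (2 * ((1 : NNReal) : ℝ))) ≤ 1 := by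
      apply Real.exp_le_one_iff.2
      push_cast
      nlinarith [sq_nonneg x]
    have h3 : 0 ≤ (Real.sqrt (2 * Real.pi * ((1 : NNReal) : ℝ)))⁻¹ := by positivity
    nlinarith [Real.exp_pos (-(x - 0) ^ 2 / (2 * ((1 : NNReal) : ℝ)))]
  have hset : {x : ℝ | |x| < r} = Metric.ball 0 r := by
    ext x; simp
  calc ∫⁻ x in {x | |x| < r}, gaussianPDF 0 1 x
      ≤ ∫⁻ x in {x : ℝ | |x| < r}, ENNReal.ofReal 0.4 := lintegral_mono (fun x => hb x)
    _ = ENNReal.ofReal (0.8 * r) := by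
      rw [setLIntegral_const, hset, Real.volume_ball, ← ENNReal.ofReal_mul (by norm_num)]
      congr 1; ring

open ProbabilityTheory in
lemma aux_sq : Integrable (fun x : ℝ => x ^ 2) (gaussianReal 0 1) ∧
    ∫ x, x ^ 2 ∂(gaussianReal 0 1) = 1 := by
  constructor
  · exact (memLp_id_gaussianReal (μ := 0) (v := 1) 2).integrable_sq
  · have h := variance_fun_id_gaussianReal (μ := 0) (v := 1)
    rw [variance_of_integral_eq_zero (by fun_prop) (by simp)] at h
    simpa using h

open ProbabilityTheory in
lemma aux_coord_s1 {m : ℕ} (hm : 1 ≤ m) (i : Fin (m + 1)) (t : ℝ) (ht : 0 ≤ t)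
    (ht2 : ((m : ℝ) + 1) * t ^ 2 ≤ 1) :
    stdGaussian (EuclideanSpace ℝ (Fin (m + 1))) {g | |g i| < t * ‖g‖} ≤
      ENNReal.ofReal (0.8 * (t * Real.sqrt (m + 1))) := by
  have hm0 : (1 : ℝ) ≤ m := by exact_mod_cast hm
  set s : ℝ := t * Real.sqrt (m + 1) / Real.sqrt m with hs
  have hs0 : 0 ≤ s := by positivity
  have hsm : 0 < Real.sqrt m := Real.sqrt_pos.2 (by linarith)
  have hs2 : s ^ 2 * m = t ^ 2 * (m + 1) := by
    rw [hs, div_pow, mul_pow, Real.sq_sqrt (by linarith), Real.sq_sqrt (by linarith)]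
    field_simp
  have hsmul : s * Real.sqrt m = t * Real.sqrt (m + 1) := by
    rw [hs]; field_simp
  have hmeas : MeasurableSet {g : EuclideanSpace ℝ (Fin (m + 1)) | |g i| < t * ‖g‖} :=
    measurableSet_lt (by fun_prop) (by fun_prop)
  let T : Set (ℝ × (Fin m → ℝ)) := {p | |p.1| < s * Real.sqrt (∑ j, p.2 j ^ 2)}
  have hT : MeasurableSet T := measurableSet_lt (by fun_prop) (by fun_prop)
  have hmp := measurePreserving_piFinSuccAbove (α := fun _ : Fin (m + 1) => ℝ)
    (fun _ => gaussianReal 0 1) i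
  rw [← map_pi_eq_stdGaussian, Measure.map_apply (by fun_prop) hmeas]
  have hI : ∀ j : Fin m, Integrable (fun y : Fin m → ℝ => y j ^ 2)
      (Measure.pi (fun _ : Fin m => gaussianReal 0 1)) := fun j =>
    (measurePreserving_eval (fun _ : Fin m => gaussianReal 0 1) j).integrable_comp_of_integrable
      aux_sq.1
  have hI2 : ∀ j : Fin m, ∫ y : Fin m → ℝ, y j ^ 2
      ∂(Measure.pi (fun _ : Fin m => gaussianReal 0 1)) = 1 := fun j => by
    rw [integral_comp_eval (μ := fun _ : Fin m => gaussianReal 0 1) (i := j)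
      (f := fun x : ℝ => x ^ 2) aux_sq.1.aestronglyMeasurable]
    exact aux_sq.2
  calc _ ≤ (Measure.pi (fun _ : Fin (m + 1) => gaussianReal 0 1))
        ((MeasurableEquiv.piFinSuccAbove (fun _ : Fin (m + 1) => ℝ) i) ⁻¹' T) := by
        apply measure_mono
        intro w hw
        have hw : |w i| < t * ‖WithLp.toLp 2 w‖ := hw
        change |w i| < s * Real.sqrt (∑ j, (w (i.succAbove j)) ^ 2)
        rw [EuclideanSpace.norm_eq, Fin.sum_univ_succAbove _ i] at hw
        simp only [Real.norm_eq_abs, sq_abs] at hw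
        set R := ∑ j, (w (i.succAbove j)) ^ 2
        have hR : 0 ≤ R := Finset.sum_nonneg (fun j _ => sq_nonneg _)
        have h1 : (w i) ^ 2 < t ^ 2 * (w i ^ 2 + R) := by
          have := pow_lt_pow_left₀ hw (abs_nonneg _) (two_ne_zero)
          rwa [sq_abs, mul_pow, Real.sq_sqrt (by positivity)] at this
        apply lt_of_pow_lt_pow_left₀ 2 (by positivity)
        rw [sq_abs, mul_pow, Real.sq_sqrt hR]
        have h2 : m * w i ^ 2 ≤ (m + 1) * (w i ^ 2 - t ^ 2 * w i ^ 2) := by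
          nlinarith [sq_nonneg (w i)]
        have h3 : (m : ℝ) * w i ^ 2 < m * (s ^ 2 * R) := by
          have : (m : ℝ) * (s ^ 2 * R) = (m + 1) * (t ^ 2 * R) := by linear_combination R * hs2
          rw [this]
          nlinarith
        exact lt_of_mul_lt_mul_left h3 (by linarith)
    _ = ((gaussianReal 0 1).prod (Measure.pi (fun _ : Fin m => gaussianReal 0 1))) T :=
        hmp.measure_preimage hT.nullMeasurableSet
    _ = ∫⁻ y, gaussianReal 0 1 {x | |x| < s * Real.sqrt (∑ j, y j ^ 2)}
          ∂(Measure.pi (fun _ : Fin m => gaussianReal 0 1)) := by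
        rw [Measure.prod_apply_symm hT]; rfl
    _ ≤ ∫⁻ y, ENNReal.ofReal (0.8 * s * (((∑ j, y j ^ 2) / Real.sqrt m + Real.sqrt m) / 2))
          ∂(Measure.pi (fun _ : Fin m => gaussianReal 0 1)) := by
        apply lintegral_mono
        intro y
        refine (aux_gauss _).trans (ENNReal.ofReal_le_ofReal ?_)
        rw [mul_assoc]
        gcongr
        have hR : 0 ≤ ∑ j, y j ^ 2 := Finset.sum_nonneg (fun j _ => sq_nonneg _)
        have := Real.sq_sqrt hR
        rw [le_div_iff₀ two_pos, ← sub_le_iff_le_add, le_div_iff₀ hsm]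
        nlinarith [sq_nonneg (Real.sqrt (∑ j, y j ^ 2) - Real.sqrt m)]
    _ = ENNReal.ofReal (∫ y : Fin m → ℝ,
          (0.8 * s * (((∑ j, y j ^ 2) / Real.sqrt m + Real.sqrt m) / 2))
          ∂(Measure.pi (fun _ : Fin m => gaussianReal 0 1))) := by
        rw [ofReal_integral_eq_lintegral_ofReal]
        · exact ((((integrable_finsetSum _ (fun j _ => hI j)).div_const _).add
            (integrable_const _)).div_const _).const_mul _
        · filter_upwards with y
          have hR : 0 ≤ ∑ j, y j ^ 2 := Finset.sum_nonneg (fun j _ => sq_nonneg _)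
          change (0:ℝ) ≤ _
          positivity
    _ = _ := by
        rw [integral_const_mul, integral_div, integral_add
          ((integrable_finsetSum _ (fun j _ => hI j)).div_const _) (integrable_const _),
          integral_div, integral_finsetSum _ (fun j _ => hI j)]
        simp only [hI2, integral_const, Finset.sum_const, Finset.card_univ, Fintype.card_fin]
        congr 1
        rw [← hsmul]
        have := Real.sq_sqrt (show (0:ℝ) ≤ m by linarith)
        simp
        field_simp

lemma aux_rot_s1 {n : ℕ} (ν : Measure (EuclideanSpace ℝ (Fin n)))
    (h : ∀ O : EuclideanSpace ℝ (Fin n) ≃ₗᵢ[ℝ] EuclideanSpace ℝ (Fin n), Measure.map O ν = ν)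
    (t : ℝ) (u w : EuclideanSpace ℝ (Fin n)) (huw : ‖u‖ = ‖w‖) :
    ν {x | |inner ℝ x u| < t * ‖x‖ } = ν {x | |inner ℝ x w| < t * ‖x‖} := by
  let O := Submodule.reflection (Submodule.span ℝ {u - w})ᗮ
  have hO : O u = w := Submodule.reflection_sub huw
  conv_rhs => rw [← h O]
  rw [Measure.map_apply (by fun_prop) (measurableSet_lt (by fun_prop) (by fun_prop))]
  congr 1
  ext x
  simp only [Set.mem_ofPred_eq, Set.mem_preimage]
  rw [← hO, O.inner_map_map, O.norm_map]

open ProbabilityTheory in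
lemma aux_fubini {n : ℕ} (μ : Measure (EuclideanSpace ℝ (Fin n)))
    (hμ : IsUniformOnSphere μ) (i : Fin n) (t : ℝ) :
    μ {x | |x i| < t} = stdGaussian (EuclideanSpace ℝ (Fin n)) {g | |g i| < t * ‖g‖} := by
  obtain ⟨hp, hs, hrot⟩ := hμ
  set ν := stdGaussian (EuclideanSpace ℝ (Fin n))
  let e : EuclideanSpace ℝ (Fin n) := EuclideanSpace.single i 1
  have he : ‖e‖ = 1 := by simp [e]
  have hin : ∀ x : EuclideanSpace ℝ (Fin n), inner ℝ x e = x i := fun x => by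
    simp [e, EuclideanSpace.inner_single_right]
  have hsph : ∀ᵐ x ∂μ, ‖x‖ = 1 := by
    have := (prob_compl_eq_zero_iff (μ := μ) (Metric.isClosed_sphere.measurableSet)).2 hs
    rw [ae_iff]
    convert this using 2
    ext x; simp
  have hg0 : ∀ᵐ g ∂ν, g ≠ 0 := by
    have hmp : ν {g | g i = 0} = 0 := by
      have hm : MeasurableSet {g : EuclideanSpace ℝ (Fin n) | g i = 0} :=
        measurableSet_eq_fun (by fun_prop) (by fun_prop)
      rw [show ν = _ from map_pi_eq_stdGaussian.symm, Measure.map_apply (by fun_prop) hm]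
      have := (measurePreserving_eval (fun _ : Fin n => gaussianReal 0 1) i).measure_preimage
        (s := {0}) (by measurability)
      have h0 := nullSingletonClass_gaussianReal (μ := 0) (v := 1) one_ne_zero
      rw [measure_singleton] at this
      exact this
    rw [ae_iff]
    refine measure_mono_null ?_ hmp
    intro g hg
    simp only [ne_eq, not_not, Set.mem_ofPred_eq] at hg ⊢
    simp [hg]
  let T : Set (EuclideanSpace ℝ (Fin n) × EuclideanSpace ℝ (Fin n)) := {p | |inner ℝ p.1 p.2| < t * (‖p.1‖ * ‖p.2‖)}
  have hT : MeasurableSet T := measurableSet_lt (by fun_prop) (by fun_prop)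
  have h1 : (μ.prod ν) T = ν {g | |g i| < t * ‖g‖} := by
    rw [Measure.prod_apply hT]
    have : ∀ᵐ x ∂μ, ν (Prod.mk x ⁻¹' T) = ν {g | |g i| < t * ‖g‖} := by
      filter_upwards [hsph] with x hx
      have := aux_rot_s1 ν (fun O => stdGaussian_map O) t x e (by rw [hx, he])
      simp only [hin] at this
      rw [← this]
      congr 1
      ext g
      change |inner ℝ x g| < t * (‖x‖ * ‖g‖) ↔ |inner ℝ g x| < t * ‖g‖
      have hx : ‖x‖ = 1 := hx
      rw [hx, one_mul, real_inner_comm]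
    rw [lintegral_congr_ae this]
    simp
  have h2 : (μ.prod ν) T = μ {x | |x i| < t} := by
    rw [Measure.prod_apply_symm hT]
    have : ∀ᵐ g ∂ν, μ ((fun x => (x, g)) ⁻¹' T) = μ {x | |x i| < t} := by
      filter_upwards [hg0] with g hg
      have hgn : 0 < ‖g‖ := norm_pos_iff.2 hg
      have := aux_rot_s1 μ hrot t ((‖g‖⁻¹) • g) e (by
        rw [norm_smul, he, norm_inv, norm_norm, inv_mul_cancel₀ hgn.ne'])
      simp only [hin] at this
      have h3 : μ {x | |x i| < t * ‖x‖} = μ {x | |x i| < t} := by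
        apply measure_congr
        filter_upwards [hsph] with x hx
        apply propext
        change |x i| < t * ‖x‖ ↔ |x i| < t
        rw [hx, mul_one]
      rw [← h3, ← this]
      congr 1
      ext x
      change |inner ℝ x g| < t * (‖x‖ * ‖g‖) ↔ |inner ℝ x (‖g‖⁻¹ • g)| < t * ‖x‖
      rw [inner_smul_right, abs_mul, abs_inv, abs_of_pos hgn, inv_mul_lt_iff₀ hgn]
      constructor <;> intro h <;> nlinarith
    rw [lintegral_congr_ae this]
    simp
  rw [← h2, h1]

/-- smallest coordinate of a random unit vector.  Let `n ≥ 2` and let `v` be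
uniformly distributed on `S^{n-1}`.  Then for any `0 ≤ c < 1` and `a > 1`, with probability at
least `exp(-2c) - exp(-((a² - √(2a² - 1))/2) n)` one has `‖v‖_min ≥ (c/a) n^{-3/2}`. -/
theorem stmt1 {n : ℕ} (hn : 2 ≤ n) (μ : Measure (EuclideanSpace ℝ (Fin n)))
    (hμ : IsUniformOnSphere μ) (c a : ℝ) (hc0 : 0 ≤ c) (hc1 : c < 1) (ha : 1 < a) :
    ENNReal.ofReal
        (Real.exp (-(2 * c))
          - Real.exp (-((a ^ 2 - Real.sqrt (2 * a ^ 2 - 1)) / 2) * n)) ≤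
      μ {x | ∀ i : Fin n, (c / a) * ((n : ℝ) ^ ((3 : ℝ) / 2))⁻¹ ≤ |x i|} := by
  have hn0 : (2 : ℝ) ≤ n := by exact_mod_cast hn
  have hp : IsProbabilityMeasure μ := hμ.1
  have hpow : (n : ℝ) ^ ((3 : ℝ) / 2) = n * Real.sqrt n := by
    rw [Real.sqrt_eq_rpow, show (3 : ℝ) / 2 = 1 + 1 / 2 by norm_num,
      Real.rpow_add (by linarith), Real.rpow_one]
  rw [hpow]
  set t := (c / a) * ((n : ℝ) * Real.sqrt n)⁻¹ with ht
  have ht0 : 0 ≤ t := by positivity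
  have hsn : 0 < Real.sqrt n := Real.sqrt_pos.2 (by linarith)
  have hsq : Real.sqrt n ^ 2 = n := Real.sq_sqrt (by linarith)
  have hca : c / a ≤ c := div_le_self hc0 ha.le
  have hca0 : 0 ≤ c / a := by positivity
  have htn : t * Real.sqrt n * n = c / a := by
    rw [ht]; field_simp
  have ht2 : (n : ℝ) * t ^ 2 ≤ 1 := by
    have h1 : t * Real.sqrt n ≤ 1 := by
      have : 0 ≤ t * Real.sqrt n := by positivity
      nlinarith
    calc (n : ℝ) * t ^ 2 = (t * Real.sqrt n) ^ 2 := by rw [mul_pow t, hsq]; ring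
      _ ≤ 1 := pow_le_one₀ (by positivity) h1
  have hmeas : MeasurableSet {x : EuclideanSpace ℝ (Fin n) | ∀ i : Fin n, t ≤ |x i|} := by
    rw [Set.ofPred_forall]
    exact MeasurableSet.iInter fun i => measurableSet_le (by fun_prop) (by fun_prop)
  have hco : ∀ i : Fin n, μ {x | |x i| < t} ≤ ENNReal.ofReal (0.8 * (t * Real.sqrt n)) := by
    intro i
    rw [aux_fubini μ hμ]
    clear * - hn ht0 ht2
    obtain ⟨m, rfl⟩ : ∃ m, n = m + 1 := ⟨n - 1, by omega⟩
    have := aux_coord_s1 (m := m) (by omega) i t ht0 (by exact_mod_cast ht2)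
    exact_mod_cast this
  have hcompl : μ {x | ∀ i : Fin n, t ≤ |x i|}ᶜ ≤ ENNReal.ofReal (0.8 * c) := by
    have hsub : {x : EuclideanSpace ℝ (Fin n) | ∀ i : Fin n, t ≤ |x i|}ᶜ
        = ⋃ i, {x | |x i| < t} := by
      ext x; simp
    rw [hsub]
    calc _ ≤ ∑ i : Fin n, μ {x | |x i| < t} := measure_iUnion_fintype_le _ _
      _ ≤ ∑ i : Fin n, ENNReal.ofReal (0.8 * (t * Real.sqrt n)) :=
        Finset.sum_le_sum fun i _ => hco i
      _ = ENNReal.ofReal (n * (0.8 * (t * Real.sqrt n))) := by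
        rw [Finset.sum_const, Finset.card_univ, Fintype.card_fin, nsmul_eq_mul,
          ENNReal.ofReal_mul (p := (n : ℝ)) (by positivity), ENNReal.ofReal_natCast]
      _ ≤ _ := ENNReal.ofReal_le_ofReal (by nlinarith)
  have hexp : Real.exp (-(2 * c)) ≤ 1 - 0.8 * c := by
    have hconv := convexOn_exp.2 (Set.mem_univ (0 : ℝ)) (Set.mem_univ (-2 : ℝ))
      (show 0 ≤ 1 - c by linarith) hc0 (by ring)
    simp only [smul_eq_mul, mul_zero, zero_add, Real.exp_zero, mul_one] at hconv
    have he2 : Real.exp (-2) ≤ 0.2 := by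
      rw [Real.exp_neg]
      have h5 : (5 : ℝ) ≤ Real.exp 2 := by
        have := Real.exp_one_gt_d9
        rw [show (2 : ℝ) = 1 + 1 by norm_num, Real.exp_add]
        nlinarith
      calc _ ≤ (5 : ℝ)⁻¹ := inv_anti₀ (by norm_num) h5
        _ = 0.2 := by norm_num
    rw [show -(2 * c) = c * (-2) by ring]
    nlinarith
  have hc := prob_compl_eq_one_sub (μ := μ) hmeas.compl
  rw [compl_compl] at hc
  rw [hc]
  calc _ ≤ ENNReal.ofReal (1 - 0.8 * c) := by
        apply ENNReal.ofReal_le_ofReal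
        have := Real.exp_pos (-((a ^ 2 - Real.sqrt (2 * a ^ 2 - 1)) / 2) * n)
        linarith
    _ = 1 - ENNReal.ofReal (0.8 * c) := by
        rw [ENNReal.ofReal_sub _ (by positivity), ENNReal.ofReal_one]
    _ ≤ _ := tsub_le_tsub_left hcompl 1
end

section
/- Fix delta in (0,1). For each n >= 2, let S_n be a subset of {1, ..., n} with |S_n| = floor(delta * n), and let v_n be a random vector uniformly distributed on the unit sphere S^{n-1} of R^n. Then the random variables sqrt(n^3 / (2 |S_n| (n - |S_n|))) * (||v_n||_{S_n}^2 - |S_n| / n) converge in distribution to the standard normal distribution N(0,1) as n tends to infinity. -/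
open MeasureTheory ProbabilityTheory Filter

/-- The characteristic function of a rotation-invariant measure is radial. -/
lemma charFun_eq_of_norm_eq {n : ℕ} {μ : Measure (EuclideanSpace ℝ (Fin n))}
    (hμ : IsUniformOnSphere μ) {s t : EuclideanSpace ℝ (Fin n)} (h : ‖s‖ = ‖t‖) :
    charFun μ s = charFun μ t := by
  let O := (ℝ ∙ (s - t))ᗮ.reflection
  have hO : O s = t := Submodule.reflection_sub h
  conv_rhs => rw [← hμ.2.2 O]
  rw [charFun_apply, charFun_apply, integral_map (by fun_prop)
    (Measurable.aestronglyMeasurable (by fun_prop))]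
  congr 1; ext x
  rw [← hO, LinearIsometryEquiv.inner_map_map]

lemma ae_norm_of_uniform {n : ℕ} {μ : Measure (EuclideanSpace ℝ (Fin n))}
    (hμ : IsUniformOnSphere μ) : ∀ᵐ x ∂μ, ‖x‖ = 1 := by
  have := hμ.1
  have h := (prob_compl_eq_zero_iff (μ := μ)
    (Metric.isClosed_sphere (x := (0 : EuclideanSpace ℝ (Fin n))) (ε := 1)).measurableSet).2 hμ.2.1
  rw [ae_iff]
  convert h using 2
  ext x; simp

/-- Averaging a characteristic function over another measure. -/
lemma integral_charFun_swap {n : ℕ} (μ ν : Measure (EuclideanSpace ℝ (Fin n)))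
    [IsProbabilityMeasure μ] [IsProbabilityMeasure ν] (r : ℝ) :
    ∫ u, charFun μ (r • u) ∂ν = ∫ x, charFun ν (r • x) ∂μ := by
  simp only [charFun_apply]
  rw [integral_integral_swap]
  · simp only [inner_smul_right]
    congr 1; ext x; congr 1; ext y; rw [real_inner_comm]
  · refine Integrable.of_bound (C := 1) (Measurable.aestronglyMeasurable ?_) ?_
    · unfold Function.uncurry; fun_prop
    · refine Filter.Eventually.of_forall fun p => ?_
      simp only [Function.uncurry]
      rw [Complex.norm_exp_ofReal_mul_I]

lemma uniform_unique {n : ℕ} {μ ν : Measure (EuclideanSpace ℝ (Fin n))}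
    (hμ : IsUniformOnSphere μ) (hν : IsUniformOnSphere ν) : μ = ν := by
  have := hμ.1
  have := hν.1
  apply Measure.ext_of_charFun
  ext t
  have h1 : ∫ u, charFun μ (‖t‖ • u) ∂ν = charFun μ t := by
    rw [integral_congr_ae (g := fun _ => charFun μ t)]
    · simp
    · filter_upwards [ae_norm_of_uniform hν] with u hu
      exact charFun_eq_of_norm_eq hμ (by simp [norm_smul, hu])
  have h2 : ∫ u, charFun ν (‖t‖ • u) ∂μ = charFun ν t := by
    rw [integral_congr_ae (g := fun _ => charFun ν t)]
    · simp
    · filter_upwards [ae_norm_of_uniform hμ] with u hu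
      exact charFun_eq_of_norm_eq hν (by simp [norm_smul, hu])
  rw [← h1, ← h2, integral_charFun_swap]

lemma stdGaussian_ae_ne_zero {n : ℕ} (hn : 0 < n) :
    ∀ᵐ x ∂(stdGaussian (EuclideanSpace ℝ (Fin n))), x ≠ 0 := by
  rw [← map_pi_eq_stdGaussian]
  refine (ae_map_iff (by fun_prop)
    (measurableSet_singleton (0 : EuclideanSpace ℝ (Fin n))).compl).2 ?_
  let i : Fin n := ⟨0, hn⟩
  have h := (measurePreserving_eval (fun _ : Fin n => gaussianReal 0 1) i)
  have h0 : ∀ᵐ y ∂(gaussianReal 0 1), y ≠ 0 := by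
    have := nullSingletonClass_gaussianReal (μ := 0) (v := 1) one_ne_zero
    exact Measure.ae_ne _ _
  filter_upwards [h.quasiMeasurePreserving.ae h0] with x hx h
  apply hx
  have := congrArg (fun z : EuclideanSpace ℝ (Fin n) => z i) h
  simpa using this

lemma stdGaussian_normalized_uniform {n : ℕ} (hn : 0 < n) :
    IsUniformOnSphere ((stdGaussian (EuclideanSpace ℝ (Fin n))).map (fun x => ‖x‖⁻¹ • x)) := by
  have hm : Measurable (fun x : EuclideanSpace ℝ (Fin n) => ‖x‖⁻¹ • x) := by fun_prop
  refine ⟨Measure.isProbabilityMeasure_map hm.aemeasurable, ?_, fun O => ?_⟩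
  · have := Measure.isProbabilityMeasure_map (μ := stdGaussian (EuclideanSpace ℝ (Fin n)))
      hm.aemeasurable
    have hs := (Metric.isClosed_sphere (x := (0 : EuclideanSpace ℝ (Fin n))) (ε := 1)).measurableSet
    rw [← prob_compl_eq_zero_iff hs, ← mem_ae_iff]
    change ∀ᵐ x ∂_, x ∈ Metric.sphere (0 : EuclideanSpace ℝ (Fin n)) 1
    refine (ae_map_iff hm.aemeasurable hs).2 ?_
    filter_upwards [stdGaussian_ae_ne_zero hn] with x hx
    simp [norm_smul, hx]
  · have hO : Measurable O := by fun_prop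
    rw [Measure.map_map hO hm]
    conv_rhs => rw [← stdGaussian_map O, Measure.map_map hm hO]
    congr 1
    ext1 x
    simp

lemma gauss_derivs :
    iteratedDeriv 2 (fun t : ℝ => Real.exp (t ^ 2 / 2)) = (fun t => (1 + t ^ 2) * Real.exp (t ^ 2 / 2))
    ∧ iteratedDeriv 4 (fun t : ℝ => Real.exp (t ^ 2 / 2))
      = (fun t => (3 + 6 * t ^ 2 + t ^ 4) * Real.exp (t ^ 2 / 2)) := by
  have he : ∀ t : ℝ, HasDerivAt (fun t : ℝ => Real.exp (t ^ 2 / 2)) (Real.exp (t ^ 2 / 2) * t) t := by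
    intro t
    convert! ((hasDerivAt_pow 2 t).div_const 2).exp using 1
    simp
  have key : ∀ (p : ℝ → ℝ) (p' : ℝ → ℝ), (∀ t, HasDerivAt p (p' t) t) →
      deriv (fun t => p t * Real.exp (t ^ 2 / 2)) = fun t => (p' t + p t * t) * Real.exp (t ^ 2 / 2) := by
    intro p p' hp
    ext t
    exact ((hp t).mul (he t)).deriv.trans (by ring)
  have h1 : deriv (fun t : ℝ => Real.exp (t ^ 2 / 2)) = fun t => t * Real.exp (t ^ 2 / 2) := by
    ext t; rw [(he t).deriv, mul_comm]
  have h2 : deriv (fun t : ℝ => t * Real.exp (t ^ 2 / 2))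
      = (fun t => (1 + t ^ 2) * Real.exp (t ^ 2 / 2)) := by
    refine (key (fun t => t) (fun _ => 1) (fun t => hasDerivAt_id t)).trans ?_; ext t; ring
  have h3 : deriv (fun t : ℝ => (1 + t ^ 2) * Real.exp (t ^ 2 / 2))
      = (fun t => (3 * t + t ^ 3) * Real.exp (t ^ 2 / 2)) := by
    rw [key _ (fun t => 2 * t) (fun t => by simpa using (hasDerivAt_pow 2 t).const_add 1)]; ext t; ring
  have h4 : deriv (fun t : ℝ => (3 * t + t ^ 3) * Real.exp (t ^ 2 / 2))
      = (fun t => (3 + 6 * t ^ 2 + t ^ 4) * Real.exp (t ^ 2 / 2)) := by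
    rw [key _ (fun t => 3 + 3 * t ^ 2)
      (fun t => by convert! ((hasDerivAt_id t).const_mul 3).add (hasDerivAt_pow 3 t) using 1; simp)]
    ext t; ring
  constructor <;> simp only [iteratedDeriv_succ, iteratedDeriv_zero, h1, h2, h3, h4]

lemma gauss_moments : ∫ x, x ^ 2 ∂(gaussianReal 0 1) = 1 ∧ ∫ x, x ^ 4 ∂(gaussianReal 0 1) = 3 := by
  have hm : mgf id (gaussianReal 0 1) = fun t => Real.exp (t ^ 2 / 2) := by
    rw [mgf_id_gaussianReal]; ext t; simp
  have hi : (0 : ℝ) ∈ interior (integrableExpSet id (gaussianReal 0 1)) := by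
    simp
  have h2 := iteratedDeriv_mgf_zero hi 2
  have h4 := iteratedDeriv_mgf_zero hi 4
  rw [hm, gauss_derivs.1] at h2
  rw [hm, gauss_derivs.2] at h4
  simp at h2 h4
  exact ⟨h2.symm, h4.symm⟩

lemma gauss_integrable (p : ℕ) : Integrable (fun x => x ^ p) (gaussianReal 0 1) := by
  have := (memLp_id_gaussianReal (μ := 0) (v := 1) p).integrable_norm_pow'
  exact (integrable_norm_iff (by fun_prop)).1 (by simpa using this)

lemma norm_prod_sub_prod_le_sum {ι : Type*} (s : Finset ι) (a b : ι → ℂ)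
    (ha : ∀ i, ‖a i‖ ≤ 1) (hb : ∀ i, ‖b i‖ ≤ 1) :
    ‖∏ i ∈ s, a i - ∏ i ∈ s, b i‖ ≤ ∑ i ∈ s, ‖a i - b i‖ := by
  classical
  induction s using Finset.induction_on with
  | empty => simp
  | insert i s hi ih =>
    rw [Finset.prod_insert hi, Finset.prod_insert hi, Finset.sum_insert hi]
    have hA : ‖∏ i ∈ s, a i‖ ≤ 1 := by
      rw [norm_prod]; exact Finset.prod_le_one (fun _ _ => norm_nonneg _) (fun i _ => ha i)
    calc _ = ‖(a i - b i) * ∏ i ∈ s, a i + b i * (∏ i ∈ s, a i - ∏ i ∈ s, b i)‖ := by congr 1; ring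
      _ ≤ ‖a i - b i‖ * 1 + 1 * ‖∏ i ∈ s, a i - ∏ i ∈ s, b i‖ := by
        refine (norm_add_le _ _).trans ?_
        rw [norm_mul, norm_mul]
        gcongr
        exact hb i
      _ ≤ _ := by linarith

/-- Central limit theorem for a triangular array of weighted sums of iid variables. -/
lemma weighted_clt {Ω : Type*} [MeasurableSpace Ω] {P : Measure Ω} [IsProbabilityMeasure P]
    (Y : ℕ → Ω → ℝ) (hY : ∀ i, Measurable (Y i)) (hind : iIndepFun Y P)
    (hident : ∀ i, IdentDistrib (Y i) (Y 0) P P) (h0 : P[Y 0] = 0) (h1 : P[Y 0 ^ 2] = 1)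
    (c : ∀ n : ℕ, Fin n → ℝ) (b : ℕ → ℝ) (hb : Tendsto b atTop (nhds 0))
    (hc : ∀ᶠ n in atTop, ∀ i, c n i ^ 2 ≤ b n)
    (hsum : ∀ᶠ n in atTop, ∑ i, c n i ^ 2 = 1) :
    TendstoInDistribution (fun (n : ℕ) ω => ∑ i : Fin n, c n i * Y i ω) atTop id
      (fun _ => P) (gaussianReal 0 1) where
  forall_aemeasurable n := by
    have := fun i => hY i
    fun_prop
  tendsto := by
    refine ProbabilityMeasure.tendsto_iff_tendsto_charFun.2 fun t => ?_
    simp only [ProbabilityMeasure.coe_mk, Measure.map_id]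
    set φ := charFun (P.map (Y 0)) with hφ
    have hcf : ∀ n, charFun (P.map (fun ω => ∑ i : Fin n, c n i * Y i ω)) t
        = ∏ i : Fin n, φ (c n i * t) := by
      intro n
      have hi : iIndepFun (fun (i : Fin n) ω => c n i * Y i ω) P :=
        (hind.precomp (g := fun i : Fin n => (i : ℕ)) Fin.val_injective).comp
          (fun i x => c n i * x) (by fun_prop)
      rw [iIndepFun.charFun_map_fun_sum_eq_prod (fun i : Fin n => ((hY i).const_mul _).aemeasurable) hi]
      rw [Finset.prod_apply]
      refine Finset.prod_congr rfl fun i _ => ?_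
      rw [charFun_map_mul_comp (hY i).aemeasurable, (hident i).map_eq]
    simp only [hcf]
    rw [charFun_gaussianReal]
    have hT : (fun u : ℝ => φ u - Complex.exp (-(u:ℂ) ^ 2 / 2)) =o[nhds 0] fun u => u ^ 2 := by
      have hA := taylor_charFun_two (hY 0).aemeasurable h0 h1
      have hB := taylor_charFun_two (P := gaussianReal 0 1) (X := id) (by fun_prop) (by simp)
        (by simpa using gauss_moments.1)
      refine (hA.sub hB).congr_left fun u => ?_
      rw [Measure.map_id, charFun_gaussianReal]
      simp only [hφ, sub_sub_sub_cancel_right]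
      congr 2; simp; ring
    rw [Metric.tendsto_nhds]
    intro ε hε
    have hε' : 0 < ε / (2 * (t ^ 2 + 1)) := by positivity
    have h2 := hT.def hε'
    rw [Metric.eventually_nhds_iff] at h2
    obtain ⟨η, hη, h2⟩ := h2
    have hb' : ∀ᶠ n in atTop, b n * t ^ 2 < η ^ 2 := by
      have : Tendsto (fun n => b n * t ^ 2) atTop (nhds (0 * t ^ 2)) := hb.mul_const _
      rw [zero_mul] at this
      exact this.eventually_lt_const (by positivity)
    filter_upwards [hb', hc, hsum] with n hn hcn hsn
    have hg : Complex.exp (t * (0 : ℝ) * Complex.I - ((1 : NNReal) : ℝ) * t ^ 2 / 2)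
        = ∏ i : Fin n, Complex.exp (-((c n i * t : ℝ) : ℂ) ^ 2 / 2) := by
      rw [← Complex.exp_sum]
      congr 1
      have : (∑ i, (c n i : ℂ) ^ 2) = 1 := by exact_mod_cast hsn
      calc _ = -(∑ i, (c n i : ℂ) ^ 2) * t ^ 2 / 2 := by rw [this]; simp; ring
        _ = _ := by
          rw [← Finset.sum_neg_distrib, Finset.sum_mul, Finset.sum_div]
          refine Finset.sum_congr rfl fun i _ => ?_
          push_cast; ring
    rw [dist_eq_norm]
    have hP : IsProbabilityMeasure (P.map (Y 0)) :=
      Measure.isProbabilityMeasure_map (hY 0).aemeasurable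
    calc _ = ‖∏ i : Fin n, φ (c n i * t)
          - ∏ i : Fin n, Complex.exp (-((c n i * t : ℝ) : ℂ) ^ 2 / 2)‖ := by
          rw [← hg]
      _ ≤ ∑ i : Fin n, ‖φ (c n i * t) - Complex.exp (-((c n i * t : ℝ) : ℂ) ^ 2 / 2)‖ := by
          refine norm_prod_sub_prod_le_sum _ _ _ (fun i => norm_charFun_le_one _) (fun i => ?_)
          rw [Complex.norm_exp]
          have : (-((c n i * t : ℝ) : ℂ) ^ 2 / 2).re = -(c n i * t) ^ 2 / 2 := by
            have : (-((c n i * t : ℝ) : ℂ) ^ 2 / 2) = ((-(c n i * t) ^ 2 / 2 : ℝ) : ℂ) := by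
              push_cast; ring
            rw [this, Complex.ofReal_re]
          rw [this, Real.exp_le_one_iff]
          nlinarith [sq_nonneg (c n i * t)]
      _ ≤ ∑ i : Fin n, ε / (2 * (t ^ 2 + 1)) * (c n i ^ 2 * t ^ 2) := by
          refine Finset.sum_le_sum fun i _ => ?_
          have := @h2 (c n i * t) (by
            rw [Real.dist_0_eq_abs]
            apply abs_lt_of_sq_lt_sq _ hη.le
            calc (c n i * t) ^ 2 = c n i ^ 2 * t ^ 2 := by ring
              _ ≤ b n * t ^ 2 := by gcongr; exact hcn i
              _ < _ := hn)
          refine this.trans (le_of_eq ?_)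
          rw [Real.norm_of_nonneg (by positivity)]; ring
      _ = ε / (2 * (t ^ 2 + 1)) * t ^ 2 := by
          rw [← Finset.mul_sum, ← Finset.sum_mul, hsn, one_mul]
      _ < ε := by
          rw [div_mul_eq_mul_div, div_lt_iff₀ (by positivity)]
          nlinarith [sq_nonneg t]

/-- The weights of the linearised statistic. -/
noncomputable def wt {n : ℕ} (S : Finset (Fin n)) (i : Fin n) : ℝ :=
  (Real.sqrt ((S.card : ℝ) * n * ((n : ℝ) - S.card)))⁻¹ *
    (if i ∈ S then (n : ℝ) - S.card else -(S.card : ℝ))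

lemma sum_ite_mul {n : ℕ} (S : Finset (Fin n)) (a b : ℝ) (g : Fin n → ℝ) :
    ∑ i, (if i ∈ S then a else b) * g i = a * ∑ i ∈ S, g i + b * (∑ i, g i - ∑ i ∈ S, g i) := by
  have h : ∀ i, (if i ∈ S then a else b) * g i = b * g i + (a - b) * (if i ∈ S then g i else 0) := by
    intro i; split_ifs <;> ring
  simp only [h, Finset.sum_add_distrib, ← Finset.mul_sum, Finset.sum_ite_mem, Finset.univ_inter]
  ring

lemma wt_sum {n : ℕ} (S : Finset (Fin n)) (h0 : 0 < S.card) (h1 : S.card < n) :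
    ∑ i, wt S i ^ 2 = 1 := by
  have hk : (0 : ℝ) < S.card := by exact_mod_cast h0
  have hkn : (0 : ℝ) < (n : ℝ) - S.card := by rw [sub_pos]; exact_mod_cast h1
  have hn : (0 : ℝ) < n := by linarith
  have h : ∀ i, wt S i ^ 2 = ((S.card : ℝ) * n * ((n : ℝ) - S.card))⁻¹ *
      ((if i ∈ S then ((n : ℝ) - S.card) ^ 2 else (S.card : ℝ) ^ 2) * 1) := by
    intro i
    rw [wt, mul_pow, inv_pow, Real.sq_sqrt (by positivity)]
    split_ifs <;> ring
  simp only [h, ← Finset.mul_sum]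
  rw [sum_ite_mul]
  simp
  field_simp
  ring

lemma wt_le {n : ℕ} (S : Finset (Fin n)) (h0 : 0 < S.card) (h1 : S.card < n) (i : Fin n) :
    wt S i ^ 2 ≤ (S.card : ℝ)⁻¹ + ((n : ℝ) - S.card)⁻¹ := by
  have hk : (0 : ℝ) < S.card := by exact_mod_cast h0
  have hkn : (0 : ℝ) < (n : ℝ) - S.card := by rw [sub_pos]; exact_mod_cast h1
  have hn : (0 : ℝ) < n := by linarith
  rw [wt, mul_pow, inv_pow, Real.sq_sqrt (by positivity)]
  calc _ ≤ ((S.card : ℝ) * n * ((n : ℝ) - S.card))⁻¹ * (n : ℝ) ^ 2 := by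
        refine mul_le_mul_of_nonneg_left ?_ (by positivity)
        split_ifs <;> nlinarith
    _ = _ := by field_simp; ring

lemma stat_eq {n : ℕ} (S : Finset (Fin n)) (h0 : 0 < S.card) (h1 : S.card < n)
    (x : Fin n → ℝ) (hT : ∑ i, x i ^ 2 ≠ 0) :
    Real.sqrt ((n : ℝ) ^ 3 / (2 * S.card * ((n : ℝ) - S.card))) *
      ((∑ i ∈ S, x i ^ 2) / (∑ i, x i ^ 2) - S.card / n)
    = (∑ i, wt S i * ((x i ^ 2 - 1) / Real.sqrt 2)) * ((∑ i, x i ^ 2) / n)⁻¹ := by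
  have hk : (0 : ℝ) < S.card := by exact_mod_cast h0
  have hkn : (0 : ℝ) < (n : ℝ) - S.card := by rw [sub_pos]; exact_mod_cast h1
  have hn : (0 : ℝ) < n := by linarith
  have hq : Real.sqrt ((n : ℝ) ^ 3 / (2 * S.card * ((n : ℝ) - S.card)))
      = (n : ℝ) ^ 2 * (Real.sqrt ((S.card : ℝ) * n * ((n : ℝ) - S.card)))⁻¹ * (Real.sqrt 2)⁻¹ := by
    rw [Real.sqrt_eq_iff_mul_self_eq_of_pos (by positivity), ← sq, mul_pow, mul_pow, inv_pow, inv_pow,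
      Real.sq_sqrt (by positivity), Real.sq_sqrt (by positivity)]
    field_simp
  have hw : ∑ i, wt S i * ((x i ^ 2 - 1) / Real.sqrt 2)
      = (Real.sqrt ((S.card : ℝ) * n * ((n : ℝ) - S.card)))⁻¹ * (Real.sqrt 2)⁻¹ *
        (((n : ℝ) - S.card) * ∑ i ∈ S, x i ^ 2 - S.card * (∑ i, x i ^ 2 - ∑ i ∈ S, x i ^ 2)) := by
    have : ∀ i, wt S i * ((x i ^ 2 - 1) / Real.sqrt 2)
      = (Real.sqrt ((S.card : ℝ) * n * ((n : ℝ) - S.card)))⁻¹ * (Real.sqrt 2)⁻¹ *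
        ((if i ∈ S then (n : ℝ) - S.card else -(S.card : ℝ)) * (x i ^ 2 - 1)) := by
      intro i; rw [wt]; ring
    simp only [this, ← Finset.mul_sum]
    rw [sum_ite_mul]
    simp
    left; ring
  rw [hq, hw, mul_assoc ((n : ℝ) ^ 2)]
  generalize (Real.sqrt ((S.card : ℝ) * n * ((n : ℝ) - S.card)))⁻¹ * (Real.sqrt 2)⁻¹ = q at *
  generalize (∑ i, x i ^ 2) = T at *
  field_simp
  ring

/-- central limit theorem for `‖v‖_S²`.  Fix `δ ∈ (0,1)`.  For each `n ≥ 2`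
let `S_n ⊆ {1,…,n}` with `|S_n| = ⌊δ n⌋` and let `v_n` be uniform on `S^{n-1}`.  Then
`√(n³/(2|S_n|(n-|S_n|))) (‖v_n‖_{S_n}² - |S_n|/n)` converges in distribution to `N(0,1)`,
i.e. the integrals of every bounded continuous function converge. -/
theorem stmt4 (δ : ℝ) (hδ0 : 0 < δ) (hδ1 : δ < 1)
    (μ : ∀ n : ℕ, Measure (EuclideanSpace ℝ (Fin n)))
    (hμ : ∀ n, 2 ≤ n → IsUniformOnSphere (μ n))
    (S : ∀ n : ℕ, Finset (Fin n))
    (hS : ∀ n, 2 ≤ n → (S n).card = ⌊δ * n⌋₊) :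
    ∀ f : BoundedContinuousFunction ℝ ℝ,
      Tendsto
        (fun n : ℕ =>
          ∫ x, f (Real.sqrt ((n : ℝ) ^ 3 /
              (2 * (S n).card * ((n : ℝ) - (S n).card))) *
            ((∑ i ∈ S n, x i ^ 2) - (S n).card / n)) ∂(μ n))
        atTop (nhds (∫ x, f x ∂(gaussianReal 0 1))) := by
  intro f
  obtain ⟨Ω, mΩ, P, X, hXm, hXl, hXi, hP⟩ := exists_iid ℕ (gaussianReal 0 1)
  -- the size of `S n`
  have hlin : Tendsto (fun n : ℕ => δ * (n : ℝ)) atTop atTop :=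
    tendsto_natCast_atTop_atTop.const_mul_atTop hδ0
  have hlin' : Tendsto (fun n : ℕ => (1 - δ) * (n : ℝ)) atTop atTop :=
    tendsto_natCast_atTop_atTop.const_mul_atTop (by linarith)
  have hk1 : Tendsto (fun n : ℕ => ((S n).card : ℝ)) atTop atTop := by
    refine (tendsto_natCast_atTop_atTop.comp (tendsto_nat_floor_atTop.comp hlin)).congr' ?_
    filter_upwards [eventually_ge_atTop 2] with n hn
    simp [hS n hn]
  have hk2 : Tendsto (fun n : ℕ => (n : ℝ) - (S n).card) atTop atTop := by
    refine tendsto_atTop_mono' _ ?_ hlin'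
    filter_upwards [eventually_ge_atTop 2] with n hn
    have := Nat.floor_le (a := δ * n) (by positivity)
    rw [hS n hn]; linarith
  have hsz : ∀ᶠ n in atTop, 0 < (S n).card ∧ (S n).card < n := by
    filter_upwards [hk1.eventually_gt_atTop 0, hk2.eventually_gt_atTop 0] with n h1 h2
    rw [sub_pos] at h2
    exact ⟨by exact_mod_cast h1, by exact_mod_cast h2⟩
  have hident : ∀ i, IdentDistrib (X i) (X 0) P P := fun i =>
    ⟨(hXm i).aemeasurable, (hXm 0).aemeasurable, by rw [(hXl i).map_eq, (hXl 0).map_eq]⟩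
  have hXint : ∀ g : ℝ → ℝ, Measurable g → ∫ ω, g (X 0 ω) ∂P = ∫ x, g x ∂(gaussianReal 0 1) := by
    intro g hg
    rw [← (hXl 0).map_eq, integral_map (hXm 0).aemeasurable hg.aestronglyMeasurable]
  -- law of large numbers
  have hlln : ∀ᵐ ω ∂P, Tendsto (fun n : ℕ => (∑ i : Fin n, X i ω ^ 2) / n) atTop (nhds 1) := by
    have hi : Integrable (fun ω => X 0 ω ^ 2) P := by
      have := gauss_integrable 2
      rw [← (hXl 0).map_eq] at this
      exact this.comp_measurable (hXm 0)
    have h := strong_law_ae_real (fun i ω => X i ω ^ 2) hi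
      (fun i j hij => (hXi.indepFun hij).comp (φ := fun x => x ^ 2) (ψ := fun x => x ^ 2)
        (by fun_prop) (by fun_prop))
      (fun i => (hident i).comp (u := fun x => x ^ 2) (by fun_prop))
    rw [hXint (fun x => x ^ 2) (by fun_prop), gauss_moments.1] at h
    filter_upwards [h] with ω hω
    refine hω.congr fun n => ?_
    rw [Fin.sum_univ_eq_sum_range (fun i => X i ω ^ 2)]
  have hmeasT : ∀ n : ℕ, Measurable (fun ω => ((∑ i : Fin n, X i ω ^ 2) / n)⁻¹) := by
    intro n
    have := fun i => hXm i
    fun_prop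
  have hprob : TendstoInMeasure P (fun (n : ℕ) ω => ((∑ i : Fin n, X i ω ^ 2) / n)⁻¹) atTop
      (fun _ => (1 : ℝ)) := by
    refine tendstoInMeasure_of_tendsto_ae (fun n => (hmeasT n).aestronglyMeasurable) ?_
    filter_upwards [hlln] with ω hω
    simpa using hω.inv₀ one_ne_zero
  -- central limit theorem
  have hclt := weighted_clt (P := P) (fun i ω => (X i ω ^ 2 - 1) / Real.sqrt 2)
    (fun i => by have := hXm i; fun_prop)
    (hXi.comp (fun _ x => (x ^ 2 - 1) / Real.sqrt 2) (by fun_prop))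
    (fun i => (hident i).comp (u := fun x => (x ^ 2 - 1) / Real.sqrt 2) (by fun_prop))
    (by
      rw [hXint (fun x => (x ^ 2 - 1) / Real.sqrt 2) (by fun_prop), integral_div,
        integral_sub (gauss_integrable 2) (integrable_const _), gauss_moments.1]
      simp)
    (by
      simp only [Pi.pow_apply]
      rw [hXint (fun x => ((x ^ 2 - 1) / Real.sqrt 2) ^ 2) (by fun_prop)]
      have : ∀ x : ℝ, ((x ^ 2 - 1) / Real.sqrt 2) ^ 2 = (x ^ 4 - 2 * x ^ 2 + 1) / 2 := by
        intro x
        rw [div_pow, Real.sq_sqrt (by norm_num)]; ring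
      simp only [this]
      have h42 : Integrable (fun x : ℝ => x ^ 4 - 2 * x ^ 2) (gaussianReal 0 1) :=
        (gauss_integrable 4).sub ((gauss_integrable 2).const_mul 2)
      rw [integral_div, integral_add h42 (integrable_const _),
        integral_sub (gauss_integrable 4) ((gauss_integrable 2).const_mul 2),
        integral_const_mul, gauss_moments.1, gauss_moments.2]
      simp; norm_num)
    (fun n => wt (S n)) (fun n => ((S n).card : ℝ)⁻¹ + ((n : ℝ) - (S n).card)⁻¹)
    (by simpa using hk1.inv_tendsto_atTop.add hk2.inv_tendsto_atTop)
    (by filter_upwards [hsz] with n hn using wt_le _ hn.1 hn.2)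
    (by filter_upwards [hsz] with n hn using wt_sum _ hn.1 hn.2)
  have hslut := hclt.continuous_comp_prodMk_of_tendstoInMeasure_const
    (g := fun p : ℝ × ℝ => p.1 * p.2) (by fun_prop) hprob (fun n => (hmeasT n).aemeasurable)
  have hlim := (ProbabilityMeasure.tendsto_iff_forall_integral_tendsto.1 hslut.tendsto) f
  simp only [ProbabilityMeasure.coe_mk, id, mul_one, Measure.map_id'] at hlim
  refine hlim.congr' ?_
  filter_upwards [hsz, eventually_ge_atTop 2] with n hn hn2
  have hfm : Measurable f := f.continuous.measurable
  have hn0 : 0 < n := by omega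
  let G : Ω → EuclideanSpace ℝ (Fin n) := fun ω => WithLp.toLp 2 (fun i : Fin n => X i ω)
  have hGm0 : Measurable (fun ω (i : Fin n) => X i ω) := measurable_pi_iff.2 fun i => hXm i
  have hGm : Measurable G := by
    exact (WithLp.measurable_toLp 2 _).comp hGm0
  have hG : P.map G = stdGaussian (EuclideanSpace ℝ (Fin n)) := by
    have h1 := (hXi.precomp (g := fun i : Fin n => (i : ℕ)) Fin.val_injective)
    have h2 := (iIndepFun_iff_map_fun_eq_pi_map (fun i : Fin n => (hXm i).aemeasurable)).1 h1
    rw [← map_pi_eq_stdGaussian]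
    have h3 : (fun i : Fin n => P.map (X i)) = fun _ => gaussianReal 0 1 := by
      ext1 i; exact (hXl i).map_eq
    rw [← h3, ← h2, Measure.map_map (by fun_prop) hGm0]
    rfl
  have hnz : ∀ᵐ ω ∂P, G ω ≠ 0 := by
    have := stdGaussian_ae_ne_zero hn0
    rw [← hG] at this
    exact ae_of_ae_map hGm.aemeasurable this
  have hnm : Measurable (fun x : EuclideanSpace ℝ (Fin n) => ‖x‖⁻¹ • x) := by fun_prop
  rw [integral_map (hslut.forall_aemeasurable n) hfm.aestronglyMeasurable,
    uniform_unique (hμ n hn2) (stdGaussian_normalized_uniform hn0), ← hG,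
    integral_map hnm.aemeasurable (Measurable.aestronglyMeasurable (by fun_prop)),
    integral_map hGm.aemeasurable (Measurable.aestronglyMeasurable (by fun_prop))]
  refine integral_congr_ae ?_
  filter_upwards [hnz] with ω hω
  have hnorm : ‖G ω‖ ^ 2 = ∑ i : Fin n, X i ω ^ 2 := by
    rw [EuclideanSpace.real_norm_sq_eq]
  have hT : ∑ i : Fin n, X i ω ^ 2 ≠ 0 := by
    rw [← hnorm]; simpa using hω
  have hst := stat_eq (S n) hn.1 hn.2 (fun i => X i ω) hT
  rw [← hst]
  congr 3
  rw [← hnorm, Finset.sum_div]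
  refine Finset.sum_congr rfl fun i _ => ?_
  simp only [PiLp.smul_apply, smul_eq_mul, mul_pow, inv_pow, G]
  rw [div_eq_inv_mul]
end

section
/- Let A be an r x m real matrix, let B be a symmetric (Hermitian) r x r real matrix, and let epsilon, tau > 0. Let x in R^m and y in R^r be vectors with ||x|| <= epsilon * tau and B y = A x. Then y can be decomposed as y = v + q, where v and q are orthogonal, ||q|| <= epsilon, and v lies in the span of the eigenvectors of B corresponding to eigenvalues lambda with |lambda| <= tau * ||A||, i.e., v belongs to the sum of the eigenspaces of B for eigenvalues of absolute value at most tau * ||A||. -/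
open Module

/-- The operator (spectral) norm of a rectangular real matrix, i.e. the norm of the induced
linear map between Euclidean spaces. -/
noncomputable def matOpNorm {r m : ℕ} (A : Matrix (Fin r) (Fin m) ℝ) : ℝ :=
  ‖LinearMap.toContinuousLinearMap (Matrix.toEuclideanLin A)‖

/-- structure of solutions of `By = Ax`.  Let `A` be an `r × m` real
matrix, `B` a symmetric `r × r` real matrix, and `ε, τ > 0`.  If `‖x‖ ≤ ετ` and `By = Ax`,
then `y = v + q` with `v ⊥ q`, `‖q‖ ≤ ε`, and `v` in the sum of the eigenspaces of `B`
corresponding to eigenvalues `λ` with `|λ| ≤ τ ‖A‖`. -/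
theorem stmt11 {r m : ℕ} (A : Matrix (Fin r) (Fin m) ℝ) (B : Matrix (Fin r) (Fin r) ℝ)
    (hB : B.IsSymm) (ε τ : ℝ) (hε : 0 < ε) (hτ : 0 < τ)
    (x : EuclideanSpace ℝ (Fin m)) (y : EuclideanSpace ℝ (Fin r))
    (hx : ‖x‖ ≤ ε * τ)
    (hxy : Matrix.toEuclideanLin B y = Matrix.toEuclideanLin A x) :
    ∃ v q : EuclideanSpace ℝ (Fin r),
      y = v + q ∧ inner (𝕜 := ℝ) v q = 0 ∧ ‖q‖ ≤ ε ∧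
      v ∈ ⨆ lam ∈ {lam : ℝ | |lam| ≤ τ * matOpNorm A},
            Module.End.eigenspace (Matrix.toEuclideanLin B) lam := by
  classical
  set c : ℝ := τ * matOpNorm A with hc
  have hc0 : 0 ≤ c := mul_nonneg hτ.le (norm_nonneg _)
  have hAx : ‖Matrix.toEuclideanLin A x‖ ≤ c * ε := by
    have h1 : ‖Matrix.toEuclideanLin A x‖ ≤ matOpNorm A * ‖x‖ :=
      (LinearMap.toContinuousLinearMap (Matrix.toEuclideanLin A)).le_opNorm x
    have h2 : matOpNorm A * ‖x‖ ≤ matOpNorm A * (ε * τ) :=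
      mul_le_mul_of_nonneg_left hx (norm_nonneg _)
    rw [hc]
    linarith
  have hT : (Matrix.toEuclideanLin B).IsSymmetric := by
    rw [Matrix.isSymmetric_toEuclideanLin_iff]
    rw [Matrix.IsHermitian, Matrix.conjTranspose_eq_transpose_of_trivial]
    exact hB
  clear_value c
  rw [← hxy] at hAx
  generalize Matrix.toEuclideanLin B = T at hT hAx ⊢
  have hn : Module.finrank ℝ (EuclideanSpace ℝ (Fin r)) = r := by simp
  rcases hc0.eq_or_lt with h0 | hpos
  · refine ⟨y, 0, by simp, by simp, by simpa using hε.le, ?_⟩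
    rw [← h0, zero_mul, norm_le_zero_iff] at hAx
    refine Submodule.mem_iSup_of_mem 0 (Submodule.mem_iSup_of_mem (by simpa using hc0) ?_)
    rw [Module.End.mem_eigenspace_iff]
    simpa using hAx
  let b := hT.eigenvectorBasis hn
  let μ := hT.eigenvalues hn
  have hrepr : ∀ i, b.repr (T y) i = μ i * b.repr y i := fun i => by
    simpa using hT.eigenvectorBasis_apply_self_apply hn y i
  let w : EuclideanSpace ℝ (Fin r) := WithLp.toLp 2 fun i => if |μ i| ≤ c then b.repr y i else 0
  let z : EuclideanSpace ℝ (Fin r) := WithLp.toLp 2 fun i => if |μ i| ≤ c then 0 else b.repr y i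
  refine ⟨b.repr.symm w, b.repr.symm z, ?_, ?_, ?_, ?_⟩
  · apply b.repr.injective
    ext i
    by_cases h : |μ i| ≤ c <;> simp [w, z, h]
  · rw [LinearIsometryEquiv.inner_map_map, PiLp.inner_apply]
    apply Finset.sum_eq_zero
    intro i _
    by_cases h : |μ i| ≤ c <;> simp [w, z, h]
  · rw [LinearIsometryEquiv.norm_map]
    have h1 : c ^ 2 * ‖z‖ ^ 2 ≤ ‖b.repr (T y)‖ ^ 2 := by
      rw [EuclideanSpace.norm_sq_eq, EuclideanSpace.norm_sq_eq, Finset.mul_sum]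
      apply Finset.sum_le_sum
      intro i _
      rw [hrepr]
      by_cases h : |μ i| ≤ c
      · have hz : z i = 0 := by simp [z, h]
        rw [hz, norm_zero]
        have := sq_nonneg ‖μ i * b.repr y i‖
        linarith
      · have hz : z i = b.repr y i := by simp [z, h]
        rw [hz, norm_mul, mul_pow, Real.norm_eq_abs (μ i)]
        have := (not_le.mp h).le
        exact mul_le_mul_of_nonneg_right (pow_le_pow_left₀ hc0 this 2) (sq_nonneg _)
    rw [LinearIsometryEquiv.norm_map, ← mul_pow] at h1
    have h2 := (sq_le_sq₀ (by positivity) (norm_nonneg _)).mp h1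
    exact le_of_mul_le_mul_left (h2.trans hAx) hpos
  · rw [← b.sum_repr_symm w]
    apply Submodule.sum_mem
    intro i _
    by_cases h : |μ i| ≤ c
    · apply Submodule.smul_mem
      refine Submodule.mem_iSup_of_mem (μ i) (Submodule.mem_iSup_of_mem h ?_)
      rw [Module.End.mem_eigenspace_iff]
      exact hT.apply_eigenvectorBasis hn i
    · simp [w, h]
end

section
/- Let A and J be r x m real matrices with ||A|| <= kappa, let B be a symmetric (Hermitian) r x r real matrix, and let epsilon, tau > 0 with 0 < epsilon < 1 (for epsilon >= 1 the statement holds trivially). Let x in R^m and y in R^r be vectors with ||x|| <= epsilon * tau, ||y|| <= 1, and B y = (A + J) x. Then: (i) there exists a non-negative real number eta such that B - eta I is invertible; and (ii) y can be decomposed as y = v + q where ||q|| <= epsilon and v lies in the subspace V spanned by the union of { eigenvectors of B with eigenvalue of absolute value at most tau * kappa } and the range of (B - eta I)^{-1} J; moreover dim(V) <= ( number of indices i with |lambda_i(B)| <= tau * kappa ) + rank(J). -/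
open Module

/-- structure of solutions of `By = (A+J)x`.  Let `A, J` be `r × m` real
matrices with `‖A‖ ≤ κ`, `B` a symmetric `r × r` real matrix, `0 < ε < 1`, `τ > 0`,
`‖x‖ ≤ ετ`, `‖y‖ ≤ 1` and `By = (A+J)x`.  Then there is `η ≥ 0` with `B - ηI` invertible,
and `y = v + q` with `‖q‖ ≤ ε` and `v` in the subspace `V` spanned by the eigenspaces of `B`
for eigenvalues of absolute value at most `τκ` together with the range of `(B - ηI)⁻¹ J`;
moreover `dim V ≤ dim(sum of those eigenspaces) + rank J`. -/
theorem stmt12 {r m : ℕ} (A J : Matrix (Fin r) (Fin m) ℝ) (B : Matrix (Fin r) (Fin r) ℝ)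
    (hB : B.IsSymm) (κ ε τ : ℝ) (hA : matOpNorm A ≤ κ)
    (hε0 : 0 < ε) (hε1 : ε < 1) (hτ : 0 < τ)
    (x : EuclideanSpace ℝ (Fin m)) (y : EuclideanSpace ℝ (Fin r))
    (hx : ‖x‖ ≤ ε * τ) (hy : ‖y‖ ≤ 1)
    (hxy : Matrix.toEuclideanLin B y = Matrix.toEuclideanLin (A + J) x) :
    ∃ η : ℝ, 0 ≤ η ∧
      IsUnit (B - η • (1 : Matrix (Fin r) (Fin r) ℝ)) ∧
      ∃ v q : EuclideanSpace ℝ (Fin r),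
        y = v + q ∧ ‖q‖ ≤ ε ∧
        v ∈ (⨆ lam ∈ {lam : ℝ | |lam| ≤ τ * κ},
                Module.End.eigenspace (Matrix.toEuclideanLin B) lam) ⊔
              LinearMap.range
                (Matrix.toEuclideanLin ((B - η • (1 : Matrix (Fin r) (Fin r) ℝ))⁻¹ * J)) ∧
        Module.finrank ℝ
            ↥((⨆ lam ∈ {lam : ℝ | |lam| ≤ τ * κ},
                Module.End.eigenspace (Matrix.toEuclideanLin B) lam) ⊔
              LinearMap.range
                (Matrix.toEuclideanLin ((B - η • (1 : Matrix (Fin r) (Fin r) ℝ))⁻¹ * J))) ≤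
          Module.finrank ℝ
            ↥(⨆ lam ∈ {lam : ℝ | |lam| ≤ τ * κ},
                Module.End.eigenspace (Matrix.toEuclideanLin B) lam) + J.rank := by
  have hT : (Matrix.toEuclideanLin B).IsSymmetric := by
    rw [Matrix.isSymmetric_toEuclideanLin_iff]
    rw [Matrix.IsHermitian, Matrix.conjTranspose_eq_transpose_of_trivial]
    exact hB
  set T := Matrix.toEuclideanLin B with hTdef
  have hn : Module.finrank ℝ (EuclideanSpace ℝ (Fin r)) = r := by simp
  set e := hT.eigenvectorBasis hn with he
  set l := hT.eigenvalues hn with hl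
  have hTe : ∀ i, T (e i) = l i • e i := fun i => by
    exact hT.apply_eigenvectorBasis hn i
  have hAx : ‖Matrix.toEuclideanLin A x‖ ≤ κ * (ε * τ) := by
    have h1 := (LinearMap.toContinuousLinearMap (Matrix.toEuclideanLin A)).le_opNorm x
    have h2 : ‖Matrix.toEuclideanLin A x‖ ≤ matOpNorm A * ‖x‖ := h1
    have h0 : 0 ≤ matOpNorm A := norm_nonneg _
    exact h2.trans (mul_le_mul hA hx (norm_nonneg _) (h0.trans hA))
  have hκ : 0 ≤ κ := le_trans (norm_nonneg _) hA
  have hev1 : ∀ᶠ η : ℝ in nhdsWithin 0 (Set.Ioi 0),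
      ∀ i, τ * κ < |l i| → τ * κ + 2 * η / ε < |l i| := by
    rw [Filter.eventually_all]
    intro i
    by_cases h : τ * κ < |l i|
    · have hc : Filter.Tendsto (fun η : ℝ => τ * κ + 2 * η / ε) (nhds 0)
          (nhds (τ * κ + 2 * 0 / ε)) := by
        apply Continuous.tendsto
        fun_prop
      have : ∀ᶠ η : ℝ in nhds 0, τ * κ + 2 * η / ε < |l i| :=
        hc.eventually_lt_const (by simpa using h)
      exact (this.filter_mono nhdsWithin_le_nhds).mono fun η hη _ => hη
    · exact Filter.Eventually.of_forall fun η h' => absurd h' h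
  have hev2 : ∀ᶠ η : ℝ in nhdsWithin 0 (Set.Ioi 0), η ∉ spectrum ℝ B := by
    have hf : (spectrum ℝ B \ {0}).Finite := (Matrix.finite_real_spectrum).subset Set.sdiff_subset
    have h1 : (spectrum ℝ B \ {0})ᶜ ∈ nhds (0 : ℝ) := hf.isClosed.isOpen_compl.mem_nhds (by simp)
    filter_upwards [mem_nhdsWithin_of_mem_nhds h1, self_mem_nhdsWithin] with η h2 h3 h4
    exact h2 ⟨h4, ne_of_gt h3⟩
  obtain ⟨η, ⟨h1, h2⟩, hη⟩ := ((hev1.and hev2).and self_mem_nhdsWithin).exists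
  have hη : 0 < η := hη
  have hU : IsUnit (B - η • (1 : Matrix (Fin r) (Fin r) ℝ)) := by
    rw [spectrum.notMem_iff, Algebra.algebraMap_eq_smul_one] at h2
    rw [← neg_sub]
    exact h2.neg
  set M := B - η • (1 : Matrix (Fin r) (Fin r) ℝ) with hM
  have hMdet : IsUnit M.det := (Matrix.isUnit_iff_isUnit_det _).1 hU
  have hmul : ∀ {a b c : ℕ} (P : Matrix (Fin a) (Fin b) ℝ) (Q : Matrix (Fin b) (Fin c) ℝ) z,
      Matrix.toEuclideanLin (P * Q) z = Matrix.toEuclideanLin P (Matrix.toEuclideanLin Q z) := by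
    intro a b c P Q z
    simp [Matrix.toLpLin_apply, Matrix.mulVec_mulVec]
  have hMT : ∀ z, Matrix.toEuclideanLin M z = T z - η • z := by
    intro z
    simp [hM, hTdef, map_sub, Matrix.toLpLin_one]
  have hone : ∀ z : EuclideanSpace ℝ (Fin r),
      Matrix.toEuclideanLin (1 : Matrix (Fin r) (Fin r) ℝ) z = z := by
    intro z
    simp [Matrix.toLpLin_one]
  set u := Matrix.toEuclideanLin A x - η • y with hu
  set w := Matrix.toEuclideanLin M⁻¹ u with hw
  have hMw : T w - η • w = u := by
    rw [← hMT, hw, ← hmul, Matrix.mul_nonsing_inv _ hMdet, hone]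
  have hyw : y = Matrix.toEuclideanLin (M⁻¹ * J) x + w := by
    have h3 : Matrix.toEuclideanLin M y = Matrix.toEuclideanLin J x + u := by
      rw [hMT, hxy, hu, map_add, LinearMap.add_apply]
      abel
    rw [hw, hmul, ← map_add, ← h3, ← hmul, Matrix.nonsing_inv_mul _ hMdet, hone]
  have hcoef : ∀ i, inner ℝ (e i) u = (l i - η) * inner ℝ (e i) w := by
    intro i
    rw [← hMw, inner_sub_right, ← hT, hTe, real_inner_smul_left, real_inner_smul_right]
    ring
  have hun : ‖u‖ ≤ κ * (ε * τ) + η := by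
    calc ‖u‖ ≤ ‖Matrix.toEuclideanLin A x‖ + ‖η • y‖ := norm_sub_le _ _
      _ ≤ κ * (ε * τ) + η := by
        rw [norm_smul, Real.norm_of_nonneg hη.le]
        nlinarith
  classical
  set q : EuclideanSpace ℝ (Fin r) :=
    ∑ i, (if τ * κ < |l i| then inner ℝ (e i) w else 0) • e i with hq
  have hqc : ∀ i, inner ℝ (e i) q = if τ * κ < |l i| then inner ℝ (e i) w else 0 := by
    intro i
    rw [hq]
    exact e.orthonormal.inner_right_fintype _ i
  have hwq : w - q ∈ ⨆ lam ∈ {lam : ℝ | |lam| ≤ τ * κ}, Module.End.eigenspace T lam := by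
    have : w - q = ∑ i, (inner ℝ (e i) w - if τ * κ < |l i| then inner ℝ (e i) w else 0) • e i := by
      simp only [sub_smul, Finset.sum_sub_distrib]
      rw [← hq, e.sum_repr']
    rw [this]
    refine Submodule.sum_mem _ fun i _ => ?_
    split_ifs with h
    · simp
    · refine Submodule.smul_mem _ _ ?_
      refine Submodule.mem_iSup_of_mem (l i) (Submodule.mem_iSup_of_mem (not_lt.1 h) ?_)
      exact Module.End.mem_eigenspace_iff.2 (hTe i)
  set c := τ * κ + 2 * η / ε - η with hc
  have hηε : η < η / ε := by
    rw [lt_div_iff₀ hε0]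
    nlinarith
  have hcpos : 0 < c := by
    have : 0 ≤ τ * κ := by positivity
    have h3 : 2 * η / ε = 2 * (η / ε) := by ring
    rw [hc, h3]
    linarith
  have hqn : c * ‖q‖ ≤ ‖u‖ := by
    have h4 : (c * ‖q‖) ^ 2 ≤ ‖u‖ ^ 2 := by
      rw [mul_pow, ← e.sum_sq_norm_inner_right q, ← e.sum_sq_norm_inner_right u, Finset.mul_sum]
      refine Finset.sum_le_sum fun i _ => ?_
      rw [hqc, hcoef]
      split_ifs with h
      · rw [norm_mul, mul_pow]
        refine mul_le_mul_of_nonneg_right ?_ (by positivity)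
        refine pow_le_pow_left₀ hcpos.le ?_ 2
        have h5 := h1 i h
        have h6 := abs_sub_abs_le_abs_sub (l i) η
        rw [abs_of_pos hη] at h6
        rw [Real.norm_eq_abs]
        linarith
      · simp only [norm_zero]
        have := sq_nonneg ‖(l i - η) * inner ℝ (e i) w‖
        simpa using this
    exact le_of_sq_le_sq h4 (norm_nonneg _)
  refine ⟨η, hη.le, hU, y - q, q, by abel, ?_, ?_, ?_⟩
  · have h7 : c * ‖q‖ ≤ c * ε := by
      refine (hqn.trans hun).trans ?_
      have : c * ε = τ * κ * ε + 2 * η - η * ε := by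
        rw [hc]
        field_simp
      rw [this]
      nlinarith
    exact le_of_mul_le_mul_left h7 hcpos
  · have : y - q = (w - q) + Matrix.toEuclideanLin (M⁻¹ * J) x := by
      nth_rewrite 1 [hyw]
      abel
    rw [this]
    exact Submodule.add_mem_sup hwq (LinearMap.mem_range_self _ x)
  · refine (Submodule.finrank_add_le_finrank_add_finrank _ _).trans ?_
    refine Nat.add_le_add_left ?_ _
    have h8 := Matrix.rank_eq_finrank_range_toLin (M⁻¹ * J) (EuclideanSpace.basisFun (Fin r) ℝ).toBasis
      (EuclideanSpace.basisFun (Fin m) ℝ).toBasis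
    rw [← Matrix.toEuclideanLin_eq_toLin_orthonormal] at h8
    rw [← h8]
    exact Matrix.rank_mul_le_right _ _
end

section
/- Let v be a unit vector in R^n, let 1 <= m < n, and let eta > 0. If min over subsets S of {1, ..., n} with |S| = m of ||v||_S^2 >= eta, then for any 1 <= p <= 2, the l^p norm of v satisfies ||v||_{l^p}^p <= ceil( n / (n - m) ) * ((1 - eta) / eta^{1 - p/2}) * m^{1 - p/2}. -/
/-- a uniform lower bound implies an upper bound on the `ℓᵖ`-norm.
Let `v ∈ ℝⁿ` be a unit vector, `1 ≤ m < n` and `η > 0`.  If every subset `S` of size `m`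
satisfies `‖v‖_S² ≥ η`, then for all `1 ≤ p ≤ 2`,
`‖v‖_{ℓᵖ}^p ≤ ⌈n/(n-m)⌉ ((1-η)/η^{1-p/2}) m^{1-p/2}`. -/
theorem stmt13 {n : ℕ} (v : EuclideanSpace ℝ (Fin n)) (hv : ‖v‖ = 1)
    (m : ℕ) (hm1 : 1 ≤ m) (hmn : m < n) (η : ℝ) (hη : 0 < η)
    (hmin : ∀ S : Finset (Fin n), S.card = m → η ≤ ∑ i ∈ S, v i ^ 2)
    (p : ℝ) (hp1 : 1 ≤ p) (hp2 : p ≤ 2) :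
    ∑ i : Fin n, |v i| ^ p ≤
      (⌈(n : ℝ) / ((n : ℝ) - m)⌉₊ : ℝ) * ((1 - η) / η ^ (1 - p / 2)) *
        (m : ℝ) ^ (1 - p / 2) := by
  classical
  have hsum : ∑ i : Fin n, v i ^ 2 = 1 := by
    have h := EuclideanSpace.real_norm_sq_eq v
    rw [hv] at h
    linarith
  -- the set of the `m` smallest coordinates
  obtain ⟨S, hS, hSmin⟩ := Finset.exists_min_image
    (Finset.powersetCard m (Finset.univ : Finset (Fin n))) (fun S => ∑ i ∈ S, v i ^ 2)
    (Finset.powersetCard_nonempty.2 (by simpa using hmn.le))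
  have hcard : S.card = m := (Finset.mem_powersetCard.1 hS).2
  have hswap : ∀ i ∈ S, ∀ j ∈ Sᶜ, v i ^ 2 ≤ v j ^ 2 := by
    intro i hi j hj
    have hj' : j ∉ S := Finset.mem_compl.1 hj
    have hje : j ∉ S.erase i := fun h => hj' (Finset.mem_of_mem_erase h)
    have h := hSmin (insert j (S.erase i)) (by
      rw [Finset.mem_powersetCard]
      refine ⟨Finset.subset_univ _, ?_⟩
      rw [Finset.card_insert_of_notMem hje, Finset.card_erase_of_mem hi]
      omega)
    have h2 := Finset.add_sum_erase S (fun i => v i ^ 2) hi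
    simp only [Finset.sum_insert hje] at h h2
    linarith
  have hmpos : (0 : ℝ) < m := by exact_mod_cast hm1
  have hnm : (0 : ℝ) < (n : ℝ) - m := by
    have : (m : ℝ) < n := by exact_mod_cast hmn
    linarith
  have hSη := hmin S hcard
  have hc : 0 < η / m := by positivity
  have hlow : ∀ j ∈ Sᶜ, η / m ≤ v j ^ 2 := by
    intro j hj
    rw [div_le_iff₀ hmpos]
    have h := Finset.sum_le_card_nsmul S (fun i => v i ^ 2) (v j ^ 2)
      (fun i hi => hswap i hi j hj)
    rw [hcard, nsmul_eq_mul] at h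
    linarith
  have hsplit2 := Finset.sum_add_sum_compl S (fun i => v i ^ 2)
  have hsplitp := Finset.sum_add_sum_compl S (fun i => |v i| ^ p)
  have hcardc : ((Sᶜ).card : ℝ) = (n : ℝ) - m := by
    rw [Finset.card_compl, hcard, Fintype.card_fin, Nat.cast_sub hmn.le]
  -- the large coordinates
  have hL : ∑ j ∈ Sᶜ, |v j| ^ p ≤ (1 - η) * (η / m) ^ (p / 2 - 1) := by
    calc ∑ j ∈ Sᶜ, |v j| ^ p ≤ ∑ j ∈ Sᶜ, v j ^ 2 * (η / m) ^ (p / 2 - 1) := by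
          refine Finset.sum_le_sum fun j hj => ?_
          have hpos : 0 < v j ^ 2 := hc.trans_le (hlow j hj)
          have e : |v j| ^ p = v j ^ 2 * (v j ^ 2) ^ (p / 2 - 1) := by
            rw [Real.rpow_sub_one hpos.ne', mul_div_cancel₀ _ hpos.ne', ← sq_abs,
              ← Real.rpow_natCast, ← Real.rpow_mul (abs_nonneg _)]
            congr 1
            push_cast
            ring
          rw [e]
          exact mul_le_mul_of_nonneg_left
            (Real.rpow_le_rpow_of_nonpos hc (hlow j hj) (by linarith)) hpos.le
      _ = (∑ j ∈ Sᶜ, v j ^ 2) * (η / m) ^ (p / 2 - 1) := by rw [Finset.sum_mul]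
      _ ≤ _ := by
          refine mul_le_mul_of_nonneg_right ?_ (Real.rpow_nonneg hc.le _)
          linarith
  -- averaging
  have havg : ((n : ℝ) - m) * ∑ i ∈ S, |v i| ^ p ≤ m * ∑ j ∈ Sᶜ, |v j| ^ p := by
    have h : ∑ i ∈ S, ∑ j ∈ Sᶜ, |v i| ^ p ≤ ∑ i ∈ S, ∑ j ∈ Sᶜ, |v j| ^ p := by
      refine Finset.sum_le_sum fun i hi => Finset.sum_le_sum fun j hj => ?_
      exact Real.rpow_le_rpow (abs_nonneg _) (sq_le_sq.1 (hswap i hi j hj)) (by linarith)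
    simp only [Finset.sum_const, nsmul_eq_mul, hcardc, hcard] at h
    rwa [← Finset.mul_sum] at h
  have hL0 : 0 ≤ ∑ j ∈ Sᶜ, |v j| ^ p :=
    Finset.sum_nonneg fun j _ => Real.rpow_nonneg (abs_nonneg _) _
  have hceil : (n : ℝ) / ((n : ℝ) - m) ≤ (⌈(n : ℝ) / ((n : ℝ) - m)⌉₊ : ℝ) := Nat.le_ceil _
  have e2 : (1 - η) / η ^ (1 - p / 2) * (m : ℝ) ^ (1 - p / 2)
      = (1 - η) * (η / m) ^ (p / 2 - 1) := by
    have : p / 2 - 1 = -(1 - p / 2) := by ring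
    rw [this, Real.rpow_neg hc.le, Real.div_rpow hη.le hmpos.le, inv_div]
    ring
  rw [mul_assoc, e2]
  calc ∑ i : Fin n, |v i| ^ p ≤ (n : ℝ) / ((n : ℝ) - m) * ∑ j ∈ Sᶜ, |v j| ^ p := by
        rw [div_mul_eq_mul_div, le_div_iff₀ hnm, ← hsplitp]
        linarith
    _ ≤ (⌈(n : ℝ) / ((n : ℝ) - m)⌉₊ : ℝ) * ∑ j ∈ Sᶜ, |v j| ^ p :=
        mul_le_mul_of_nonneg_right hceil hL0
    _ ≤ _ := mul_le_mul_of_nonneg_left hL (Nat.cast_nonneg _)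
end

section
/- Let v be a unit vector in R^n, let 1 <= m <= n, and let eta > 0. If max over subsets S of {1, ..., n} with |S| = m of ||v||_S^2 <= eta, then for any 1 <= p <= 2, the l^p norm of v satisfies ||v||_{l^p}^p >= ((1 - eta) / eta^{1 - p/2}) * m^{1 - p/2}. -/
/-- a uniform upper bound implies a lower bound on the `ℓᵖ`-norm.
Let `v ∈ ℝⁿ` be a unit vector, `1 ≤ m ≤ n` and `η > 0`.  If every subset `S` of size `m`
satisfies `‖v‖_S² ≤ η`, then for all `1 ≤ p ≤ 2`,
`‖v‖_{ℓᵖ}^p ≥ ((1-η)/η^{1-p/2}) m^{1-p/2}`. -/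
theorem stmt14 {n : ℕ} (v : EuclideanSpace ℝ (Fin n)) (hv : ‖v‖ = 1)
    (m : ℕ) (hm1 : 1 ≤ m) (hmn : m ≤ n) (η : ℝ) (hη : 0 < η)
    (hmax : ∀ S : Finset (Fin n), S.card = m → (∑ i ∈ S, v i ^ 2) ≤ η)
    (p : ℝ) (hp1 : 1 ≤ p) (hp2 : p ≤ 2) :
    ((1 - η) / η ^ (1 - p / 2)) * (m : ℝ) ^ (1 - p / 2) ≤
      ∑ i : Fin n, |v i| ^ p := by

  have hm : (0:ℝ) < m := by exact_mod_cast hm1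
  have hc : 0 < η / m := div_pos hη hm
  have hsum : ∑ i, v i ^ 2 = 1 := by
    have h := EuclideanSpace.norm_sq_eq v
    rw [hv] at h
    simpa using h.symm
  obtain ⟨S, hS, hSc⟩ : ∃ S : Finset (Fin n), S.card = m ∧ ∀ i ∉ S, v i ^ 2 ≤ η / m := by
    set T : Finset (Fin n) := Finset.univ.filter (fun i => η / m < v i ^ 2) with hT
    have hTm : T.card ≤ m := by
      by_contra hlt
      obtain ⟨U, hUT, hU⟩ := Finset.exists_subset_card_eq (le_of_not_ge hlt)
      have h1 := hmax U hU
      have h2 : ∑ i ∈ U, η / m < ∑ i ∈ U, v i ^ 2 := by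
        apply Finset.sum_lt_sum_of_nonempty
        · rw [← Finset.card_pos]; omega
        · intro i hi
          have := hUT hi
          rw [hT, Finset.mem_filter] at this
          exact this.2
      rw [Finset.sum_const, hU, nsmul_eq_mul, mul_div_cancel₀ _ hm.ne'] at h2
      linarith
    obtain ⟨S, hTS, hS⟩ := Finset.exists_superset_card_eq hTm (by simpa using hmn)
    refine ⟨S, hS, fun i hi => ?_⟩
    by_contra hlt
    exact hi (hTS (by rw [hT, Finset.mem_filter]; exact ⟨Finset.mem_univ _, not_le.mp hlt⟩))
  have hq : 0 ≤ 1 - p / 2 := by linarith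
  have key : ∀ i ∉ S, v i ^ 2 ≤ (η / m) ^ (1 - p / 2) * |v i| ^ p := by
    intro i hi
    rcases eq_or_ne (v i) 0 with h0 | h0
    · rw [h0]; simp; positivity
    have hpos : 0 < |v i| := abs_pos.mpr h0
    have h1 : v i ^ 2 = (v i ^ 2) ^ (1 - p / 2) * |v i| ^ p := by
      rw [← sq_abs, ← Real.rpow_natCast, ← Real.rpow_mul hpos.le, ← Real.rpow_add hpos]
      congr 1
      push_cast
      ring
    calc v i ^ 2 = (v i ^ 2) ^ (1 - p / 2) * |v i| ^ p := h1
      _ ≤ _ := mul_le_mul_of_nonneg_right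
        (Real.rpow_le_rpow (sq_nonneg _) (hSc i hi) hq) (by positivity)
  have h3 : 1 - η ≤ (η / m) ^ (1 - p / 2) * ∑ i, |v i| ^ p := by
    have h4 := Finset.sum_add_sum_compl S (fun i => v i ^ 2)
    have h5 := hmax S hS
    have h6 : ∑ i ∈ Sᶜ, v i ^ 2 ≤ ∑ i ∈ Sᶜ, (η / m) ^ (1 - p / 2) * |v i| ^ p :=
      Finset.sum_le_sum fun i hi => key i (Finset.mem_compl.mp hi)
    have h7 : ∑ i ∈ Sᶜ, (η / m) ^ (1 - p / 2) * |v i| ^ p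
        ≤ ∑ i, (η / m) ^ (1 - p / 2) * |v i| ^ p :=
      Finset.sum_le_sum_of_subset_of_nonneg (Finset.subset_univ _)
        (fun i _ _ => by positivity)
    rw [Finset.mul_sum]
    linarith
  have hη' : 0 < η ^ (1 - p / 2) := Real.rpow_pos_of_pos hη _
  have hm' : 0 < (m:ℝ) ^ (1 - p / 2) := Real.rpow_pos_of_pos hm _
  rw [Real.div_rpow hη.le hm.le, div_mul_eq_mul_div, le_div_iff₀ hm'] at h3
  rw [div_mul_eq_mul_div, div_le_iff₀ hη']
  linarith
end
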